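/- arXiv:2406.06766 — 2 statements merged into one kernel-verified Lean document; each statement's English description precedes it below -/
import Mathlib

section
/- Let k be a field, R = k[x_1,…,x_d], T = k[y_1,…,y_n], and B = R ⊗_k T, bigraded by bideg x_i = (1,0) and bideg y_j = (0,1). Let f_1,…,f_d be a B-regular sequence of bihomogeneous elements contained in m = (x_1,…,x_d)B with bideg f_i = (α_i,β_i), and set S = B/(f_1,…,f_d), δ = (Σ_{i=1}^d α_i) − d, τ = Σ_{i=1}^d β_i. Then there is a bihomogeneous isomorphism of B-modules H^0_m(S) ≅ Hom_T(S,T)(−δ,−τ). -/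
/-!
STATEMENT 0 (Jouanolou-type duality for bigraded complete intersections):
`B = k[x_1,…,x_d] ⊗_k k[y_1,…,y_n]`, bigraded with `bideg x_i = (1,0)`, `bideg y_j = (0,1)`.
If `f_1,…,f_d` is a `B`-regular sequence of bihomogeneous elements contained in
`m = (x_1,…,x_d)B` with `bideg f_i = (α_i, β_i)` and `S = B/(f_1,…,f_d)`, then there is a
bihomogeneous isomorphism of `B`-modules `H⁰_m(S) ≅ Hom_T(S,T)(−δ,−τ)` where
`δ = (Σ α_i) − d` and `τ = Σ β_i`.
-/

open MvPolynomial

noncomputable section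

namespace Stmt0

variable (k : Type) [Field k] (d n : ℕ)

/-- `B = R ⊗_k T = k[x_1,…,x_d,y_1,…,y_n]`. -/
abbrev B := MvPolynomial (Fin d ⊕ Fin n) k

/-- `T = k[y_1,…,y_n]`. -/
abbrev T := MvPolynomial (Fin n) k

/-- `B` is a `T`-algebra via `y_j ↦ y_j`. -/
instance : Algebra (T k n) (B k d n) :=
  ((rename Sum.inr : T k n →ₐ[k] B k d n).toRingHom).toAlgebra

/-- The bigrading weight: `bideg x_i = (1,0)`, `bideg y_j = (0,1)`. -/
def bwt : (Fin d ⊕ Fin n) → ℕ × ℕ := Sum.elim (fun _ => (1, 0)) (fun _ => (0, 1))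

/-- The ideal `m = (x_1,…,x_d)B`. -/
def mxB : Ideal (B k d n) := Ideal.span (Set.range fun i : Fin d => (X (Sum.inl i) : B k d n))

variable (I : Ideal (B k d n))

/-- `H⁰_m(S)`: the elements of `S = B/I` annihilated by a power of `m`. -/
def H0 : Submodule (B k d n) (B k d n ⧸ I) :=
  ⨆ N : ℕ, Submodule.torsionBySet (B k d n) (B k d n ⧸ I)
    ((mxB k d n ^ N : Ideal (B k d n)) : Set (B k d n))

/-- The bigraded component of `S = B/I` in bidegree `p` (image of the bihomogeneous
component of `B` of bidegree `p`). -/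
def Scomp (p : ℕ × ℕ) : Submodule k (B k d n ⧸ I) :=
  (weightedHomogeneousSubmodule k (bwt d n) p).map (Ideal.Quotient.mkₐ k I).toLinearMap

/-- The graded component of `T` in (possibly negative) degree `j`. -/
def TcompZ (j : ℤ) : Submodule k (T k n) :=
  if 0 ≤ j then homogeneousSubmodule (Fin n) k j.toNat else ⊥

set_option synthInstance.maxHeartbeats 1000000
set_option maxHeartbeats 1600000

/-- The action of `S = B/I` on `Hom_T(S,T)` through the source. -/
instance dualSMul : SMul (B k d n ⧸ I) ((B k d n ⧸ I) →ₗ[T k n] T k n) :=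
  ⟨fun s φ => φ.comp (LinearMap.mulLeft (T k n) s)⟩

theorem dual_smul_apply (s x : B k d n ⧸ I) (φ : (B k d n ⧸ I) →ₗ[T k n] T k n) :
    (s • φ) x = φ (s * x) := rfl

/-- `Hom_T(S,T)` is a module over `S = B/I`, via the action on the source. -/
instance dualModS : Module (B k d n ⧸ I) ((B k d n ⧸ I) →ₗ[T k n] T k n) where
  one_smul φ := LinearMap.ext fun x => by rw [dual_smul_apply, one_mul]
  mul_smul a b φ := LinearMap.ext fun x => by
    rw [dual_smul_apply, dual_smul_apply, dual_smul_apply, mul_left_comm, mul_assoc]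
  smul_zero s := rfl
  smul_add s φ ψ := rfl
  add_smul a b φ := LinearMap.ext fun x => by
    rw [dual_smul_apply, add_mul, map_add]; rfl
  zero_smul φ := LinearMap.ext fun x => by
    rw [dual_smul_apply, zero_mul, map_zero]; rfl

/-- `Hom_T(S,T)` is a `B`-module, via `B → S`. -/
instance dualModB : Module (B k d n) ((B k d n ⧸ I) →ₗ[T k n] T k n) :=
  Module.compHom _ (algebraMap (B k d n) (B k d n ⧸ I))

/-- The bigraded component of bidegree `(u,v)` of the bigraded `B`-module `Hom_T(S,T)`:
a `T`-linear map `φ` is bihomogeneous of bidegree `(u,v)` if for every bihomogeneous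
`s ∈ S` of bidegree `(p,q)` the element `φ(s)` is homogeneous of degree `q + v` in `T`,
and `φ(s) = 0` unless `p + u = 0` (as `T` is concentrated in `x`-degree `0`). -/
def HomComp (u v : ℤ) : Set ((B k d n ⧸ I) →ₗ[T k n] T k n) :=
  {φ | ∀ (p q : ℕ) (s : B k d n ⧸ I), s ∈ Scomp k d n I (p, q) →
      φ s ∈ TcompZ k n ((q : ℤ) + v) ∧ (((p : ℤ) + u ≠ 0) → φ s = 0)}

/-! ### An explicit Koszul complex -/

section Koszul
variable {A : Type} [CommRing A]

/-- The ideal generated by the first `m` members of a sequence. -/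
def gI (g : ℕ → A) (m : ℕ) : Ideal A := Ideal.span (g '' Set.Iio m)

lemma gI_zero (g : ℕ → A) : gI g 0 = ⊥ := by
  simp [gI]

lemma gI_succ (g : ℕ → A) (m : ℕ) : gI g (m + 1) = gI g m ⊔ Ideal.span {g m} := by
  unfold gI
  rw [← Ideal.span_union]
  congr 1
  ext x
  simp only [Set.mem_image, Set.mem_Iio, Set.mem_union, Set.mem_singleton_iff]
  constructor
  · rintro ⟨i, hi, rfl⟩
    rcases Nat.lt_succ_iff_lt_or_eq.1 hi with h | rfl
    · exact Or.inl ⟨i, h, rfl⟩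
    · exact Or.inr rfl
  · rintro (⟨i, hi, rfl⟩ | rfl)
    · exact ⟨i, by omega, rfl⟩
    · exact ⟨m, by omega, rfl⟩

lemma mem_gI_succ {g : ℕ → A} {m : ℕ} {b : A} :
    b ∈ gI g (m + 1) ↔ ∃ c, b - g m * c ∈ gI g m := by
  rw [gI_succ, Submodule.mem_sup]
  constructor
  · rintro ⟨y, hy, z, hz, rfl⟩
    obtain ⟨c, rfl⟩ := Ideal.mem_span_singleton'.1 hz
    exact ⟨c, by simpa [mul_comm] using hy⟩
  · rintro ⟨c, hc⟩
    exact ⟨_, hc, g m * c, Ideal.mem_span_singleton.2 ⟨c, rfl⟩, by ring⟩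

lemma gI_le_succ (g : ℕ → A) (m : ℕ) : gI g m ≤ gI g (m + 1) := by
  rw [gI_succ]; exact le_sup_left

lemma g_mem_gI {g : ℕ → A} {m i : ℕ} (h : i < m) : g i ∈ gI g m :=
  Ideal.subset_span ⟨i, h, rfl⟩

/-- Vectors supported in cohomological degree `q`. -/
def Sup {ι : Type} (deg : ι → ℤ) (q : ℤ) (v : ι → A) : Prop := ∀ i, deg i ≠ q → v i = 0

/-- The data of a Koszul complex for `g 0, …, g (m-1)`. -/
structure Kos (g : ℕ → A) (m : ℕ) (H : AddSubgroup A) where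
  ι : Type
  [ft : Fintype ι]
  [de : DecidableEq ι]
  D : Matrix ι ι A
  deg : ι → ℤ
  top : ι
  bot : ι
  DD : D * D = 0
  Ddeg : ∀ i j, deg i ≠ deg j + 1 → D i j = 0
  DH : ∀ i j, D i j ∈ H
  deg0 : ∀ i, 0 ≤ deg i
  degm : ∀ i, deg i ≤ m
  degbot : ∀ i, deg i = 0 ↔ i = bot
  degtop : ∀ i, deg i = m ↔ i = top
  Dtop : ∀ j, D top j ∈ gI g m
  topex : ∀ t ∈ gI g m, ∃ w, Sup deg (m - 1) w ∧ D.mulVec w = Pi.single top t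
  Dbot : ∀ (J : Ideal A) (s : A), (∀ i, D i bot * s ∈ J) ↔ ∀ j < m, g j * s ∈ J
  exact : ∀ q : ℤ, q < m → ∀ v, Sup deg q v → D.mulVec v = 0 →
    ∃ w, Sup deg (q - 1) w ∧ v = D.mulVec w

attribute [instance] Kos.ft Kos.de

lemma Sup.mulVec {g : ℕ → A} {m : ℕ} {H : AddSubgroup A} (K : Kos g m H) {q : ℤ} {v : K.ι → A}
    (hv : Sup K.deg q v) : Sup K.deg (q + 1) (K.D.mulVec v) := by
  intro i hi
  refine Finset.sum_eq_zero fun j _ => ?_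
  change K.D i j * v j = 0
  by_cases h : K.deg j = q
  · rw [K.Ddeg i j (by omega), zero_mul]
  · rw [hv j h, mul_zero]

lemma Kos.single_top {g : ℕ → A} {m : ℕ} {H : AddSubgroup A} (K : Kos g m H) {v : K.ι → A}
    (hv : Sup K.deg m v) : v = Pi.single K.top (v K.top) := by
  ext i
  by_cases h : i = K.top
  · subst h; simp
  · rw [Pi.single_eq_of_ne h, hv i (fun h' => h ((K.degtop i).1 h'))]

lemma Kos.sup_top {g : ℕ → A} {m : ℕ} {H : AddSubgroup A} (K : Kos g m H) (t : A) :
    Sup K.deg m (Pi.single K.top t : K.ι → A) := by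
  intro i hi
  exact Pi.single_eq_of_ne (fun h => hi ((K.degtop i).2 h)) _

lemma Kos.single_bot {g : ℕ → A} {m : ℕ} {H : AddSubgroup A} (K : Kos g m H) {v : K.ι → A}
    (hv : Sup K.deg 0 v) : v = Pi.single K.bot (v K.bot) := by
  ext i
  by_cases h : i = K.bot
  · subst h; simp
  · rw [Pi.single_eq_of_ne h, hv i (fun h' => h ((K.degbot i).1 h'))]

lemma Kos.sup_bot {g : ℕ → A} {m : ℕ} {H : AddSubgroup A} (K : Kos g m H) (t : A) :
    Sup K.deg 0 (Pi.single K.bot t : K.ι → A) := by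
  intro i hi
  exact Pi.single_eq_of_ne (fun h => hi ((K.degbot i).2 h)) _

/-- The empty Koszul complex. -/
def kosZero (g : ℕ → A) (H : AddSubgroup A) : Kos g 0 H where
  ι := Unit
  D := 0
  deg := fun _ => 0
  top := ()
  bot := ()
  DD := by simp
  Ddeg := by simp
  DH := fun _ _ => H.zero_mem
  deg0 := by simp
  degm := by simp
  degbot := by simp
  degtop := by simp
  Dtop := fun _ => Ideal.zero_mem _
  topex := by
    intro t ht
    rw [gI_zero, Ideal.mem_bot] at ht
    subst ht
    exact ⟨0, fun _ _ => rfl, by simp⟩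
  Dbot := by simp
  exact := by
    intro q hq v hv _
    refine ⟨0, fun _ _ => rfl, ?_⟩
    ext i
    simp only [Matrix.mulVec_zero, Pi.zero_apply]
    apply hv
    simp at hq
    exact fun h => by simp at h; omega

/-- The cone construction. -/
def kosSucc {g : ℕ → A} {m : ℕ} {H : AddSubgroup A} (K : Kos g m H) (hH : g m ∈ H)
    (hreg : ∀ b, g m * b ∈ gI g m → b ∈ gI g m) : Kos g (m + 1) H where
  ι := K.ι ⊕ K.ι
  D := Matrix.fromBlocks K.D 0 (g m • 1) (-K.D)
  deg := Sum.elim K.deg (fun i => K.deg i + 1)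
  top := Sum.inr K.top
  bot := Sum.inl K.bot
  DD := by
    rw [Matrix.fromBlocks_multiply]
    simp [K.DD]
  Ddeg := by
    rintro (i | i) (j | j) h
    · exact K.Ddeg i j h
    · rfl
    · simp only [Sum.elim_inr, Sum.elim_inl] at h
      have : i ≠ j := by rintro rfl; exact h rfl
      simp [Matrix.one_apply_ne this]
    · simp only [Sum.elim_inr] at h
      simp [K.Ddeg i j (by omega)]
  DH := by
    rintro (i | i) (j | j)
    · exact K.DH i j
    · exact H.zero_mem
    · by_cases h : i = j
      · subst h; simpa using hH
      · simp [Matrix.one_apply_ne h, H.zero_mem]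
    · simpa using K.DH i j
  deg0 := by
    rintro (i | i)
    · exact K.deg0 i
    · have := K.deg0 i; simp; omega
  degm := by
    rintro (i | i)
    · have := K.degm i; simp; omega
    · have := K.degm i; simp; omega
  degbot := by
    rintro (i | i)
    · simpa using K.degbot i
    · have := K.deg0 i; simp; omega
  degtop := by
    rintro (i | i)
    · have := K.degm i; simp; omega
    · simpa using K.degtop i
  Dtop := by
    rintro (j | j)
    · by_cases h : K.top = j
      · subst h; simpa using g_mem_gI (Nat.lt_succ_self m)
      · simp [Matrix.one_apply_ne h]
    · simpa using gI_le_succ _ _ (K.Dtop j)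
  topex := by
    intro t ht
    obtain ⟨c, hc⟩ := mem_gI_succ.1 ht
    obtain ⟨w, hw, hDw⟩ := K.topex _ hc
    refine ⟨Sum.elim (Pi.single K.top c) (-w), ?_, ?_⟩
    · rintro (i | i) h
      · exact K.sup_top c i (by simpa using h)
      · simp only [Sum.elim_inr, Nat.cast_add, Nat.cast_one] at h
        simp [hw i (by omega)]
    · have h0 : K.D.mulVec (Pi.single K.top c) = 0 := by
        ext i
        exact Sup.mulVec K (K.sup_top c) i (by have := K.degm i; omega)
      rw [Matrix.fromBlocks_mulVec]
      ext (i | i)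
      · simp [h0]
      · simp only [Sum.elim_comp_inl, Sum.elim_comp_inr, Sum.elim_inr, Pi.add_apply,
          Matrix.smul_mulVec, Matrix.one_mulVec, Pi.smul_apply, Matrix.neg_mulVec_neg, hDw]
        by_cases h : i = K.top
        · subst h; simp
        · have h' : (Sum.inr i : K.ι ⊕ K.ι) ≠ Sum.inr K.top := fun e => h (Sum.inr.inj e)
          rw [Pi.single_eq_of_ne h', Pi.single_eq_of_ne h, Pi.single_eq_of_ne h]
          simp
  Dbot := by
    intro J s
    have := K.Dbot J s
    constructor
    · intro h j hj
      rcases Nat.lt_succ_iff_lt_or_eq.1 hj with hj | rfl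
      · exact this.1 (fun i => h (Sum.inl i)) j hj
      · simpa using h (Sum.inr K.bot)
    · intro h
      rintro (i | i)
      · exact this.2 (fun j hj => h j (by omega)) i
      · by_cases hi : i = K.bot
        · subst hi; simpa using h m (by omega)
        · simp [Matrix.one_apply_ne hi]
  exact := by
    intro q hq v hv hD
    set a := v ∘ Sum.inl with ha
    set b := v ∘ Sum.inr with hb
    have hva : Sup K.deg q a := fun i hi => hv (Sum.inl i) hi
    have hvb : Sup K.deg (q - 1) b := fun i hi => hv (Sum.inr i) (by simp; omega)
    rw [Matrix.fromBlocks_mulVec, ← ha, ← hb] at hD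
    have h1 : K.D.mulVec a = 0 := by
      ext i
      simpa using congrFun hD (Sum.inl i)
    have h2 : g m • a = K.D.mulVec b := by
      ext i
      have := congrFun hD (Sum.inr i)
      simp [Matrix.smul_mulVec, Matrix.neg_mulVec] at this
      rw [← sub_eq_zero, ← this]
      simp; ring
    have h3 : ∃ w, Sup K.deg (q - 1) w ∧ a = K.D.mulVec w := by
      by_cases hqm : q < m
      · exact K.exact q hqm a hva h1
      · have hqm : q = m := by push_cast at hq; omega
        subst hqm
        have e := K.single_top hva
        have h4 : g m * a K.top ∈ gI g m := by
          have := congrFun h2 K.top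
          simp only [Pi.smul_apply, smul_eq_mul] at this
          rw [this]
          exact Ideal.sum_mem _ fun j _ => Ideal.mul_mem_right _ _ (K.Dtop j)
        obtain ⟨w, hw, hw'⟩ := K.topex _ (hreg _ h4)
        exact ⟨w, hw, by rw [hw', ← e]⟩
    obtain ⟨w, hw, haw⟩ := h3
    obtain ⟨u, hu, hu'⟩ := K.exact (q - 1) (by push_cast at hq; omega) (b - g m • w)
      (fun i hi => by simp [hvb i hi, hw i hi])
      (by rw [Matrix.mulVec_sub, Matrix.mulVec_smul, ← haw, h2, sub_self])
    refine ⟨Sum.elim w (-u), ?_, ?_⟩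
    · rintro (i | i) h
      · exact hw i h
      · simp only [Sum.elim_inr] at h
        simp [hu i (by omega)]
    · rw [Matrix.fromBlocks_mulVec]
      ext (i | i)
      · have := congrFun haw i
        simp [ha] at this ⊢
        exact this
      · have := congrFun hu' i
        simp only [Sum.elim_comp_inl, Sum.elim_comp_inr, Sum.elim_inr, Pi.add_apply,
          Matrix.smul_mulVec, Matrix.one_mulVec, Pi.smul_apply, Matrix.neg_mulVec_neg]
        rw [← this]
        simp [hb]

lemma exists_kos (g : ℕ → A) (H : AddSubgroup A) (m : ℕ) (hH : ∀ i < m, g i ∈ H)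
    (hreg : ∀ i < m, ∀ b, g i * b ∈ gI g i → b ∈ gI g i) : Nonempty (Kos g m H) := by
  induction m with
  | zero => exact ⟨kosZero g H⟩
  | succ m ih =>
    obtain ⟨K⟩ := ih (fun i hi => hH i (by omega)) (fun i hi => hreg i (by omega))
    exact ⟨kosSucc K (hH m (by omega)) (hreg m (by omega))⟩

end Koszul
/-! ### The zigzag relation -/

section Zigzag
variable {A : Type} [CommRing A] {g : ℕ → A} {d : ℕ} {H : AddSubgroup A}

lemma mulVec_mem {ι : Type} [Fintype ι] (D : Matrix ι ι A) (J : Ideal A) {v : ι → A}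
    (hv : ∀ i, v i ∈ J) (i : ι) : D.mulVec v i ∈ J :=
  Ideal.sum_mem _ fun j _ => Ideal.mul_mem_left _ _ (hv j)

lemma Kos.DDv (K : Kos g d H) (v : K.ι → A) : K.D.mulVec (K.D.mulVec v) = 0 := by
  rw [Matrix.mulVec_mulVec, K.DD, Matrix.zero_mulVec]

/-- Cocycles modulo `J`. -/
def Kos.Z (K : Kos g d H) (J : Ideal A) (q : ℤ) (v : K.ι → A) : Prop :=
  Sup K.deg q v ∧ ∀ i, K.D.mulVec v i ∈ J

/-- Coboundaries modulo `J`. -/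
def Kos.Bd (K : Kos g d H) (J : Ideal A) (q : ℤ) (v : K.ι → A) : Prop :=
  ∃ w, Sup K.deg (q - 1) w ∧ ∀ i, v i - K.D.mulVec w i ∈ J

lemma exists_sup {f : ℕ → A} {ι : Type} {deg : ι → ℤ} {q : ℤ} {m : ℕ} {v : ι → A}
    (hs : Sup deg q v) (hv : ∀ i, v i ∈ gI f (m + 1)) :
    ∃ u, Sup deg q u ∧ ∀ i, v i - f m * u i ∈ gI f m := by
  classical
  choose c hc using fun i => mem_gI_succ.1 (hv i)
  refine ⟨fun i => if deg i = q then c i else 0, fun i hi => by simp [hi], fun i => ?_⟩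
  by_cases h : deg i = q
  · simpa [h] using hc i
  · simp [h, hs i h]

/-- One step of the zigzag. -/
def Kos.R (K : Kos g d H) (f : ℕ → A) (m : ℕ) (v u : K.ι → A) : Prop :=
  ∀ i, K.D.mulVec v i - f m * u i ∈ gI f m

variable (K : Kos g d H) (f : ℕ → A)

/-- Regularity of the sequence `f`. -/
def RegSeq (f : ℕ → A) (d : ℕ) : Prop := ∀ i < d, ∀ b, f i * b ∈ gI f i → b ∈ gI f i

variable {f}

lemma Kos.R.cyc {m : ℕ} (hreg : ∀ b, f m * b ∈ gI f m → b ∈ gI f m) {v u : K.ι → A}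
    (h : K.R f m v u) (i : K.ι) : K.D.mulVec u i ∈ gI f m := by
  apply hreg
  have h1 := mulVec_mem K.D (gI f m) h i
  have h2 : K.D.mulVec (fun i => K.D.mulVec v i - f m * u i) i = - (f m * K.D.mulVec u i) := by
    have : (fun i => K.D.mulVec v i - f m * u i) = K.D.mulVec v - f m • u := rfl
    rw [this, Matrix.mulVec_sub, K.DDv, Matrix.mulVec_smul]
    simp
  rw [h2] at h1
  exact (Ideal.neg_mem_iff _).1 h1

lemma Kos.ex (hreg : RegSeq f d) (m : ℕ) (hm : m ≤ d) (q : ℤ) (hq : q < d - m) (v : K.ι → A)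
    (hv : K.Z (gI f m) q v) : K.Bd (gI f m) q v := by
  induction m generalizing q v with
  | zero =>
    obtain ⟨w, hw, hw'⟩ := K.exact q (by simpa using hq) v hv.1 (by
      ext i
      simpa [gI_zero] using hv.2 i)
    exact ⟨w, hw, fun i => by simp [hw']⟩
  | succ m ih =>
    push_cast at hq
    obtain ⟨u, hu, hu'⟩ := exists_sup (Sup.mulVec K hv.1) hv.2
    obtain ⟨w, hw, hw'⟩ := ih (by omega) (q + 1) (by omega) u
      ⟨hu, Kos.R.cyc K (hreg m (by omega)) (v := v) hu'⟩
    rw [add_sub_cancel_right] at hw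
    obtain ⟨w', hw1, hw2⟩ := ih (by omega) q (by omega) (v - f m • w)
      ⟨fun i hi => by simp [hv.1 i hi, hw i hi], fun i => by
        rw [Matrix.mulVec_sub, Matrix.mulVec_smul]
        have h1 := Ideal.add_mem _ (hu' i) (Ideal.mul_mem_left _ (f m) (hw' i))
        convert h1 using 1
        simp; ring⟩
    refine ⟨w', hw1, fun i => mem_gI_succ.2 ⟨w i, ?_⟩⟩
    convert hw2 i using 1
    simp; ring

lemma Kos.Ra {m : ℕ} (hreg : ∀ b, f m * b ∈ gI f m → b ∈ gI f m) {q : ℤ} {v : K.ι → A}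
    (hv : K.Z (gI f (m + 1)) q v) : ∃ u, K.Z (gI f m) (q + 1) u ∧ K.R f m v u := by
  obtain ⟨u, hu, hu'⟩ := exists_sup (Sup.mulVec K hv.1) hv.2
  exact ⟨u, ⟨hu, Kos.R.cyc K hreg (v := v) hu'⟩, hu'⟩

lemma Kos.Rb {m : ℕ} (hreg : ∀ b, f m * b ∈ gI f m → b ∈ gI f m) {q : ℤ} {v u : K.ι → A}
    (hs : Sup K.deg q v) (h : K.R f m v u)
    (hv : K.Bd (gI f (m + 1)) q v) : K.Bd (gI f m) (q + 1) u := by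
  obtain ⟨w, hw, hw'⟩ := hv
  have hs' : Sup K.deg q (v - K.D.mulVec w) := fun i hi => by
    have := Sup.mulVec K hw i (by omega)
    simp [hs i hi, this]
  obtain ⟨c, hc, hc'⟩ := exists_sup hs' hw'
  refine ⟨c, by simpa using hc, fun i => hreg _ ?_⟩
  have h1 := mulVec_mem K.D _ hc' i
  have h2 : (fun i => (v - K.D.mulVec w) i - f m * c i) = v - K.D.mulVec w - f m • c := rfl
  rw [h2, Matrix.mulVec_sub, Matrix.mulVec_sub, K.DDv, Matrix.mulVec_smul] at h1
  convert Ideal.sub_mem _ h1 (h i) using 1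
  simp; ring

lemma Kos.Rc (hreg : RegSeq f d) {m : ℕ} (hm : m < d) {q : ℤ} (hq : q < d - m) {v u : K.ι → A}
    (hs : Sup K.deg q v) (h : K.R f m v u)
    (hu : K.Bd (gI f m) (q + 1) u) : K.Bd (gI f (m + 1)) q v := by
  obtain ⟨w, hw, hw'⟩ := hu
  rw [add_sub_cancel_right] at hw
  obtain ⟨w', hw1, hw2⟩ := K.ex hreg m hm.le q hq (v - f m • w)
    ⟨fun i hi => by simp [hs i hi, hw i hi], fun i => by
      rw [Matrix.mulVec_sub, Matrix.mulVec_smul]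
      convert Ideal.add_mem _ (h i) (Ideal.mul_mem_left _ (f m) (hw' i)) using 1
      simp; ring⟩
  refine ⟨w', hw1, fun i => mem_gI_succ.2 ⟨w i, ?_⟩⟩
  convert hw2 i using 1
  simp; ring

/-- The iterated zigzag relation. -/
def Kos.rho (K : Kos g d H) (f : ℕ → A) : ℕ → (K.ι → A) → A → Prop
  | 0, v, t => v = Pi.single K.top t
  | m + 1, v, t => Sup K.deg (d - (m + 1)) v ∧ ∃ u, Kos.rho K f m u t ∧ K.R f m v u

lemma Kos.rho_sup {m : ℕ} {v : K.ι → A} {t : A} (h : K.rho f m v t) :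
    Sup K.deg (d - m) v := by
  cases m with
  | zero => rw [show v = _ from h]; simpa using K.sup_top t
  | succ m => simpa using h.1

lemma Kos.rho_smul {m : ℕ} {v : K.ι → A} {t : A} (b : A) (h : K.rho f m v t) :
    K.rho f m (b • v) (b * t) := by
  induction m generalizing v with
  | zero =>
    rw [show v = _ from h]
    change _ = _
    ext i
    by_cases hi : i = K.top
    · subst hi; simp
    · simp [Pi.single_eq_of_ne hi]
  | succ m ih =>
    obtain ⟨hs, u, hu, hR⟩ := h
    refine ⟨fun i hi => by simp [hs i hi], b • u, ih hu, fun i => ?_⟩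
    rw [Matrix.mulVec_smul]
    convert Ideal.mul_mem_left _ b (hR i) using 1
    simp; ring

lemma Kos.rho_add {m : ℕ} {v v' : K.ι → A} {t t' : A} (h : K.rho f m v t)
    (h' : K.rho f m v' t') : K.rho f m (v + v') (t + t') := by
  induction m generalizing v v' with
  | zero =>
    rw [show v = _ from h, show v' = _ from h']
    exact (Pi.single_add _ _ _).symm
  | succ m ih =>
    obtain ⟨hs, u, hu, hR⟩ := h
    obtain ⟨hs', u', hu', hR'⟩ := h'
    refine ⟨fun i hi => by simp [hs i hi, hs' i hi], u + u', ih hu hu', fun i => ?_⟩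
    rw [Matrix.mulVec_add]
    convert Ideal.add_mem _ (hR i) (hR' i) using 1
    simp; ring

lemma Kos.rho_a (hreg : RegSeq f d) {m : ℕ} (hm : m ≤ d) {v : K.ι → A}
    (hv : K.Z (gI f m) (d - m) v) : ∃ t, K.rho f m v t := by
  induction m generalizing v with
  | zero => exact ⟨_, K.single_top (by simpa using hv.1)⟩
  | succ m ih =>
    obtain ⟨u, hu, hR⟩ := K.Ra (hreg m hm) hv
    obtain ⟨t, ht⟩ := ih (by omega) (v := u) (by convert hu using 1; push_cast; ring)
    exact ⟨t, by simpa using hv.1, u, ht, hR⟩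

lemma Kos.bd_top {t : A} : K.Bd (gI f 0) d (Pi.single K.top t) ↔ t ∈ gI g d := by
  constructor
  · rintro ⟨w, hw, hw'⟩
    have := hw' K.top
    rw [gI_zero, Ideal.mem_bot, Pi.single_eq_same, sub_eq_zero] at this
    rw [this]
    exact Ideal.sum_mem _ fun j _ => Ideal.mul_mem_right _ _ (K.Dtop j)
  · intro h
    obtain ⟨w, hw, hw'⟩ := K.topex t h
    exact ⟨w, hw, fun i => by simp [hw']⟩

lemma Kos.rho_b (hreg : RegSeq f d) {m : ℕ} (hm : m ≤ d) {v : K.ι → A} {t : A}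
    (h : K.rho f m v t) (hv : K.Bd (gI f m) (d - m) v) : t ∈ gI g d := by
  induction m generalizing v with
  | zero =>
    rw [show v = _ from h] at hv
    exact K.bd_top.1 (by simpa using hv)
  | succ m ih =>
    obtain ⟨hs, u, hu, hR⟩ := h
    have := K.Rb (hreg m hm) hs hR (by simpa using hv)
    exact ih (by omega) hu (by convert this using 1; ring)

lemma Kos.rho_c (hreg : RegSeq f d) {m : ℕ} (hm : m ≤ d) {v : K.ι → A} {t : A}
    (h : K.rho f m v t) (ht : t ∈ gI g d) : K.Bd (gI f m) (d - m) v := by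
  induction m generalizing v with
  | zero =>
    rw [show v = _ from h]
    simpa using K.bd_top.2 ht
  | succ m ih =>
    obtain ⟨hs, u, hu, hR⟩ := h
    have := ih (by omega) hu
    have h2 := K.Rc hreg (show m < d by omega) (by omega) hs hR (by convert this using 1; ring)
    simpa using h2

lemma Kos.rho_d (hreg : RegSeq f d) {m : ℕ} (hm : m ≤ d) {t : A}
    (ht : ∀ j < m, f j * t ∈ gI g d) : ∃ v, K.rho f m v t := by
  induction m with
  | zero => exact ⟨_, rfl⟩
  | succ m ih =>
    obtain ⟨u, hu⟩ := ih (by omega) fun j hj => ht j (by omega)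
    obtain ⟨v, hv, hv'⟩ := K.rho_c hreg (by omega) (K.rho_smul (f m) hu) (ht m (by omega))
    refine ⟨v, by convert hv using 1; ring, u, hu, fun i => ?_⟩
    convert (Ideal.neg_mem_iff _).2 (hv' i) using 1
    simp

lemma Kos.rho_e (hreg : RegSeq f d) {m : ℕ} (hm : m ≤ d) {v : K.ι → A} {t : A}
    (h : K.rho f m v t) : K.Z (gI f m) (d - m) v ∧ ∀ j < m, f j * t ∈ gI g d := by
  induction m generalizing v with
  | zero =>
    refine ⟨⟨K.rho_sup h, fun i => ?_⟩, by simp⟩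
    rw [Sup.mulVec K (K.rho_sup h) i (by have := K.degm i; simp; omega)]
    exact Ideal.zero_mem _
  | succ m ih =>
    have hs0 := K.rho_sup h
    obtain ⟨hs, u, hu, hR⟩ := h
    refine ⟨⟨hs0, fun i => mem_gI_succ.2 ⟨u i, hR i⟩⟩, fun j hj => ?_⟩
    rcases Nat.lt_succ_iff_lt_or_eq.1 hj with hj | rfl
    · exact (ih (by omega) hu).2 j hj
    · refine K.rho_b hreg (by omega) (K.rho_smul (f j) hu) ⟨v, by convert hs using 1; ring, fun i => ?_⟩
      convert (Ideal.neg_mem_iff _).2 (hR i) using 1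
      simp

/-- The relation on ring elements. -/
def Kos.sig (K : Kos g d H) (f : ℕ → A) (s t : A) : Prop := K.rho f d (Pi.single K.bot s) t

lemma Kos.sig_smul {s t : A} (b : A) (h : K.sig f s t) : K.sig f (b * s) (b * t) := by
  have := K.rho_smul b h
  unfold Kos.sig
  rwa [← Pi.single_smul, smul_eq_mul] at this

lemma Kos.sig_add {s t s' t' : A} (h : K.sig f s t) (h' : K.sig f s' t') :
    K.sig f (s + s') (t + t') := by
  have := K.rho_add h h'
  unfold Kos.sig
  rwa [← Pi.single_add] at this

lemma Kos.Dsingle_bot (s : A) (i : K.ι) : K.D.mulVec (Pi.single K.bot s) i = K.D i K.bot * s := by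
  simp [Matrix.mulVec_single]

lemma Kos.bd_bot {J : Ideal A} {s : A} : K.Bd J 0 (Pi.single K.bot s) ↔ s ∈ J := by
  constructor
  · rintro ⟨w, hw, hw'⟩
    have : w = 0 := by
      ext i
      exact hw i (by have := K.deg0 i; omega)
    subst this
    simpa using hw' K.bot
  · intro h
    refine ⟨0, fun _ _ => rfl, fun i => ?_⟩
    by_cases hi : i = K.bot
    · subst hi; simpa using h
    · simp [Pi.single_eq_of_ne hi]

lemma Kos.sig_a (hreg : RegSeq f d) {s : A} (hs : ∀ j < d, g j * s ∈ gI f d) :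
    ∃ t, K.sig f s t := by
  refine K.rho_a hreg le_rfl ⟨by simpa using K.sup_bot s, fun i => ?_⟩
  rw [K.Dsingle_bot]
  exact (K.Dbot _ _).2 hs i

lemma Kos.sig_b (hreg : RegSeq f d) {s t : A} (h : K.sig f s t) (hs : s ∈ gI f d) :
    t ∈ gI g d :=
  K.rho_b hreg le_rfl h (by simpa using K.bd_bot.2 hs)

lemma Kos.sig_c (hreg : RegSeq f d) {s t : A} (h : K.sig f s t) (ht : t ∈ gI g d) :
    s ∈ gI f d :=
  K.bd_bot.1 (by simpa using K.rho_c hreg le_rfl h ht)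

lemma Kos.sig_d (hreg : RegSeq f d) {t : A} (ht : ∀ j < d, f j * t ∈ gI g d) :
    ∃ s, K.sig f s t := by
  obtain ⟨v, hv⟩ := K.rho_d hreg le_rfl ht
  have e := K.single_bot (v := v) (by simpa using K.rho_sup hv)
  rw [e] at hv
  exact ⟨_, hv⟩

lemma Kos.sig_e (hreg : RegSeq f d) {s t : A} (h : K.sig f s t) :
    (∀ j < d, g j * s ∈ gI f d) ∧ ∀ j < d, f j * t ∈ gI g d := by
  obtain ⟨h1, h2⟩ := K.rho_e hreg le_rfl h
  refine ⟨(K.Dbot _ _).1 fun i => ?_, h2⟩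
  rw [← K.Dsingle_bot]
  exact h1.2 i

/-- Additive operators (homogeneous components) respect the zigzag relation. -/
lemma Kos.rho_comp {Γ : Type} [AddCommGroup Γ] (π : Γ → A →+ A) (γ : Γ) (φ : ℕ → Γ)
    (hH : ∀ h ∈ H, ∀ p b, π (p + γ) (h * b) = h * π p b)
    (hf : ∀ i < d, ∀ p b, π (p + φ i) (f i * b) = f i * π p b)
    (hI : ∀ i ≤ d, ∀ p, ∀ b ∈ gI f i, π p b ∈ gI f i)
    {m : ℕ} (hm : m ≤ d) {v : K.ι → A} {t : A} (h : K.rho f m v t) (p : Γ) :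
    K.rho f m (fun i => π p (v i)) (π (p + m • γ - ∑ i ∈ Finset.range m, φ i) t) := by
  induction m generalizing v p with
  | zero =>
    rw [show v = _ from h]
    change _ = _
    ext i
    by_cases hi : i = K.top
    · subst hi; simp
    · simp [Pi.single_eq_of_ne hi]
  | succ m ih =>
    obtain ⟨hs, u, hu, hR⟩ := h
    refine ⟨fun i hi => by simp [hs i hi], fun i => π (p + γ - φ m) (u i), ?_, fun i => ?_⟩
    · convert ih (by omega) hu (p + γ - φ m) using 2
      rw [Finset.sum_range_succ, succ_nsmul]; abel_nf
    · have h1 := hI m (by omega) (p + γ) _ (hR i)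
      have h2 : π (p + γ) (f m * u i) = f m * π (p + γ - φ m) (u i) := by
        rw [← hf m (by omega)]; congr 2; abel
      have h3 : π (p + γ) (K.D.mulVec v i) = K.D.mulVec (fun i => π p (v i)) i := by
        change π (p + γ) (∑ j, K.D i j * v j) = ∑ j, K.D i j * π p (v j)
        rw [map_sum]
        exact Finset.sum_congr rfl fun j _ => hH _ (K.DH i j) p _
      rwa [map_sub, h2, h3] at h1

lemma Kos.sig_comp {Γ : Type} [AddCommGroup Γ] (π : Γ → A →+ A) (γ : Γ) (φ : ℕ → Γ)
    (hH : ∀ h ∈ H, ∀ p b, π (p + γ) (h * b) = h * π p b)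
    (hf : ∀ i < d, ∀ p b, π (p + φ i) (f i * b) = f i * π p b)
    (hI : ∀ i ≤ d, ∀ p, ∀ b ∈ gI f i, π p b ∈ gI f i)
    {s t : A} (h : K.sig f s t) (p : Γ) :
    K.sig f (π p s) (π (p + d • γ - ∑ i ∈ Finset.range d, φ i) t) := by
  have := K.rho_comp π γ φ hH hf hI le_rfl h p
  unfold Kos.sig
  convert this using 1
  ext i
  by_cases hi : i = K.bot
  · subst hi; simp
  · simp [Pi.single_eq_of_ne hi]

end Zigzag
/-! ### Gradings -/

section Grading

/-- Homogeneous components are compatible with multiplication by homogeneous elements. -/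
lemma comp_mul {k σ Γ : Type} [Field k] [AddCommGroup Γ] (w : σ → Γ)
    {h : MvPolynomial σ k} {γ : Γ} (hh : IsWeightedHomogeneous w h γ) (p : Γ)
    (b : MvPolynomial σ k) :
    weightedHomogeneousComponent w (p + γ) (h * b) = h * weightedHomogeneousComponent w p b := by
  classical
  let := weightedGradedAlgebra k w
  have := DirectSum.coe_decompose_mul_add_of_left_mem (weightedHomogeneousSubmodule k w)
    (j := p) (b := b) (show h ∈ weightedHomogeneousSubmodule k w γ from hh)
  have e : ∀ (c : MvPolynomial σ k) (q : Γ),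
      ((DirectSum.decompose (weightedHomogeneousSubmodule k w) c q : _) : MvPolynomial σ k)
        = weightedHomogeneousComponent w q c := fun c q =>
    weightedDecomposition.decompose'_apply k w c q
  rw [e, e] at this
  rw [add_comm p γ, this]

lemma comp_mem_gI {k σ Γ : Type} [Field k] [AddCommGroup Γ] (w : σ → Γ)
    (f : ℕ → MvPolynomial σ k) (φ : ℕ → Γ) (m : ℕ)
    (hf : ∀ i < m, IsWeightedHomogeneous w (f i) (φ i)) (p : Γ) (b : MvPolynomial σ k)
    (hb : b ∈ gI f m) : weightedHomogeneousComponent w p b ∈ gI f m := by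
  induction m generalizing b with
  | zero =>
    rw [gI_zero, Ideal.mem_bot] at hb
    simp [hb]
  | succ m ih =>
    obtain ⟨c, hc⟩ := mem_gI_succ.1 hb
    have h1 := ih (fun i hi => hf i (by omega)) _ hc
    refine mem_gI_succ.2 ⟨weightedHomogeneousComponent w (p - φ m) c, ?_⟩
    rw [← comp_mul w (hf m (by omega))]
    rwa [sub_add_cancel, ← map_sub]

/-- The bigrading with values in `ℤ × ℤ`. -/
def wZ : (Fin d ⊕ Fin n) → ℤ × ℤ := Sum.elim (fun _ => (1, 0)) (fun _ => (0, 1))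

/-- The grading by `x`-degree. -/
def wX : (Fin d ⊕ Fin n) → ℤ := Sum.elim (fun _ => 1) (fun _ => 0)

lemma weight_wZ (c : (Fin d ⊕ Fin n) →₀ ℕ) :
    Finsupp.weight (wZ d n) c
      = (((∑ i, c (Sum.inl i) : ℕ) : ℤ), ((∑ j, c (Sum.inr j) : ℕ) : ℤ)) := by
  rw [Finsupp.weight_apply, Finsupp.sum_fintype _ _ (by simp), Fintype.sum_sum_type]
  simp only [wZ, Sum.elim_inl, Sum.elim_inr]
  ext
  · simp [Prod.fst_sum]
  · simp [Prod.snd_sum]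

lemma weight_bwt (c : (Fin d ⊕ Fin n) →₀ ℕ) :
    Finsupp.weight (bwt d n) c = (∑ i, c (Sum.inl i), ∑ j, c (Sum.inr j)) := by
  rw [Finsupp.weight_apply, Finsupp.sum_fintype _ _ (by simp), Fintype.sum_sum_type]
  simp only [bwt, Sum.elim_inl, Sum.elim_inr]
  ext
  · simp [Prod.fst_sum]
  · simp [Prod.snd_sum]

lemma weight_wX (c : (Fin d ⊕ Fin n) →₀ ℕ) :
    Finsupp.weight (wX d n) c = ((∑ i, c (Sum.inl i) : ℕ) : ℤ) := by
  rw [Finsupp.weight_apply, Finsupp.sum_fintype _ _ (by simp), Fintype.sum_sum_type]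
  simp [wX]

variable {k d n}

lemma homZ_iff {b : B k d n} {p q : ℕ} :
    b ∈ weightedHomogeneousSubmodule k (bwt d n) (p, q) ↔
      IsWeightedHomogeneous (wZ d n) b ((p : ℤ), (q : ℤ)) := by
  rw [mem_weightedHomogeneousSubmodule]
  unfold IsWeightedHomogeneous
  simp only [weight_wZ, weight_bwt, Prod.mk.injEq, Nat.cast_inj]

lemma homX_of_homZ {b : B k d n} {p : ℤ × ℤ}
    (h : IsWeightedHomogeneous (wZ d n) b p) : IsWeightedHomogeneous (wX d n) b p.1 := by
  intro c hc
  have := h hc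
  rw [weight_wZ] at this
  rw [weight_wX, ← this]

lemma homX_inr (t : T k n) : IsWeightedHomogeneous (wX d n) (algebraMap (T k n) (B k d n) t) 0 := by
  intro c hc
  change coeff c (rename Sum.inr t) ≠ 0 at hc
  rw [weight_wX]
  obtain ⟨u, rfl, hu⟩ := coeff_rename_ne_zero _ _ _ hc
  norm_cast
  refine Finset.sum_eq_zero fun i _ => ?_
  exact Finsupp.mapDomain_of_notMem_range _ _ (by simp)

end Grading

/-! ### Monomial ideals -/

section Mono

/-- The sequence `x_1^N, …, x_d^N`. -/
def gX (N : ℕ) (i : ℕ) : B k d n := if h : i < d then X (Sum.inl ⟨i, h⟩) ^ N else 0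

variable {k d n}

lemma mem_gX {N m : ℕ} (hm : m ≤ d) {b : B k d n} :
    b ∈ gI (gX k d n N) m ↔ ∀ c ∈ b.support, ∃ i : Fin d, (i : ℕ) < m ∧ N ≤ c (Sum.inl i) := by
  have : gI (gX k d n N) m = Ideal.span ((fun s => monomial s (1 : k)) ''
      ((fun i : Fin d => Finsupp.single (Sum.inl i : Fin d ⊕ Fin n) N) '' {i | (i : ℕ) < m})) := by
    unfold gI
    congr 1
    ext y
    simp only [Set.mem_image, Set.mem_Iio, Set.mem_ofPred_eq, exists_exists_and_eq_and]
    constructor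
    · rintro ⟨i, hi, rfl⟩
      refine ⟨⟨i, by omega⟩, hi, ?_⟩
      simp [gX, show i < d by omega, X_pow_eq_monomial]
    · rintro ⟨i, hi, rfl⟩
      refine ⟨i, hi, ?_⟩
      simp [gX, X_pow_eq_monomial]
  rw [this, mem_ideal_span_monomial_image]
  refine forall₂_congr fun c _ => ?_
  simp only [Set.mem_image, Set.mem_ofPred_eq, exists_exists_and_eq_and]
  refine exists_congr fun i => and_congr_right fun _ => ?_
  exact Finsupp.single_le_iff

lemma gX_reg (N : ℕ) : RegSeq (gX k d n N) d := by
  intro i hi b hb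
  rw [mem_gX hi.le] at hb ⊢
  intro c hc
  have e : gX k d n N i = monomial (Finsupp.single (Sum.inl ⟨i, hi⟩) N) 1 := by
    simp [gX, hi, X_pow_eq_monomial]
  obtain ⟨j, hj, hN⟩ := hb (Finsupp.single (Sum.inl ⟨i, hi⟩) N + c) (by
    rw [mem_support_iff, e, coeff_monomial_mul, one_mul]
    exact mem_support_iff.1 hc)
  refine ⟨j, hj, ?_⟩
  have : (Sum.inl ⟨i, hi⟩ : Fin d ⊕ Fin n) ≠ Sum.inl j := by
    intro h
    have := Sum.inl.inj h
    subst this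
    simp at hj
  simpa [Finsupp.single_apply, this] using hN

lemma gX_hom (N i : ℕ) : IsWeightedHomogeneous (wZ d n) (gX k d n N i) ((N : ℤ), 0) := by
  unfold gX
  split_ifs with h
  · have := (isWeightedHomogeneous_X k (wZ d n) (Sum.inl ⟨i, h⟩)).pow N
    convert this using 1
    simp [wZ]
  · exact isWeightedHomogeneous_zero k _ _

end Mono

/-! ### Coefficients in `T` -/

section Coeffs

variable {k d n}

/-- Coefficient of `x^a`, as an element of `T`. -/
def cf (a : Fin d →₀ ℕ) : B k d n →ₗ[T k n] T k n where
  toFun b := coeff a (sumAlgEquiv k (Fin d) (Fin n) b)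
  map_add' b c := by simp
  map_smul' t b := by
    rw [Algebra.smul_def, map_mul]
    have : sumAlgEquiv k (Fin d) (Fin n) (algebraMap (T k n) (B k d n) t) = C t :=
      DFunLike.congr_fun (sumAlgEquiv_comp_rename_inr k (Fin d) (Fin n)) t
    rw [this, coeff_C_mul]
    rfl

/-- The monomial `x^a`. -/
def xm (a : Fin d →₀ ℕ) : B k d n := monomial (a.mapDomain Sum.inl) 1

lemma sumAlg_xm (a : Fin d →₀ ℕ) :
    sumAlgEquiv k (Fin d) (Fin n) (xm a) = monomial a 1 := by
  have h := DFunLike.congr_fun (sumAlgEquiv_comp_rename_inl k (Fin d) (Fin n)) (monomial a 1)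
  have h1 : (xm a : B k d n) = rename Sum.inl (monomial a 1) := by
    rw [rename_monomial]; rfl
  rw [h1]
  refine h.trans ?_
  simp

lemma cf_xm (a a' : Fin d →₀ ℕ) : cf a (xm a' : B k d n) = if a' = a then 1 else 0 := by
  classical
  change coeff _ (sumAlgEquiv k (Fin d) (Fin n) _) = _
  rw [sumAlg_xm, coeff_monomial]

lemma coeff_cf (a : Fin d →₀ ℕ) (c : Fin n →₀ ℕ) (b : B k d n) :
    coeff c (cf a b) = coeff (Finsupp.sumElim a c) b := by
  classical
  induction b using MvPolynomial.induction_on' with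
  | add p q hp hq => rw [map_add, coeff_add, coeff_add, hp, hq]
  | monomial u r =>
    obtain ⟨a', c', rfl⟩ : ∃ a' c', Finsupp.sumElim a' c' = u :=
      ⟨_, _, Finsupp.comapDomain_sumElim_comapDomain u⟩
    have e : (monomial (Finsupp.sumElim a' c') r : B k d n)
        = (monomial c' r : T k n) • xm a' := by
      rw [Algebra.smul_def]
      change _ = rename Sum.inr (monomial c' r) * _
      rw [rename_monomial, xm, monomial_mul, mul_one, Finsupp.sumElim_eq_add, add_comm]
    have e2 : a' = a ∧ c' = c ↔ Finsupp.sumElim a' c' = Finsupp.sumElim a c := by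
      constructor
      · rintro ⟨rfl, rfl⟩; rfl
      · intro h
        constructor
        · ext i
          exact DFunLike.congr_fun h (Sum.inl i)
        · ext i
          exact DFunLike.congr_fun h (Sum.inr i)
    rw [coeff_monomial, e, map_smul, cf_xm, smul_eq_mul, if_congr e2.symm rfl rfl]
    by_cases h1 : a' = a <;> by_cases h2 : c' = c <;>
      simp [h1, h2, coeff_monomial]

lemma xm_add (a a' : Fin d →₀ ℕ) : (xm (a + a') : B k d n) = xm a * xm a' := by
  simp [xm, Finsupp.mapDomain_add, monomial_mul]

lemma cf_mul_xm (a a' : Fin d →₀ ℕ) (b : B k d n) : cf (a + a') (b * xm a') = cf a b := by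
  change coeff _ (sumAlgEquiv k (Fin d) (Fin n) _) = coeff _ (sumAlgEquiv k (Fin d) (Fin n) _)
  rw [map_mul, sumAlg_xm, coeff_mul_monomial, mul_one]

lemma sum_cf (b : B k d n) :
    b = ∑ a ∈ (sumAlgEquiv k (Fin d) (Fin n) b).support, cf a b • (xm a : B k d n) := by
  apply (sumAlgEquiv k (Fin d) (Fin n)).injective
  rw [map_sum]
  conv_lhs => rw [as_sum (sumAlgEquiv k (Fin d) (Fin n) b)]
  refine Finset.sum_congr rfl fun a _ => ?_
  rw [Algebra.smul_def, map_mul, sumAlg_xm]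
  have : sumAlgEquiv k (Fin d) (Fin n) (algebraMap (T k n) (B k d n) (cf a b)) = C (cf a b) :=
    DFunLike.congr_fun (sumAlgEquiv_comp_rename_inr k (Fin d) (Fin n)) _
  rw [this, C_mul_monomial, mul_one]
  rfl

lemma T_ext {ψ ψ' : B k d n →ₗ[T k n] T k n} (h : ∀ a, ψ (xm a) = ψ' (xm a)) : ψ = ψ' := by
  ext1 b
  rw [sum_cf b, map_sum, map_sum]
  exact Finset.sum_congr rfl fun a _ => by rw [map_smul, map_smul, h]

/-- The exponent `(N-1, …, N-1)`. -/
def Nv (d N : ℕ) : Fin d →₀ ℕ := Finsupp.equivFunOnFinite.symm fun _ => N - 1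

/-- `b ↦ res (t b)`. -/
def resl (N : ℕ) (t : B k d n) : B k d n →ₗ[T k n] T k n :=
  (cf (Nv d N)).comp (LinearMap.mulLeft (T k n) t)

lemma resl_apply (N : ℕ) (t b : B k d n) : resl N t b = cf (Nv d N) (t * b) := rfl

lemma Xpow_eq (N : ℕ) (i : Fin d) : (X (Sum.inl i) ^ N : B k d n) = xm (Finsupp.single i N) := by
  rw [X_pow_eq_monomial, xm, Finsupp.mapDomain_single]

lemma cf_Nv_gI {N : ℕ} (hN : 1 ≤ N) {b : B k d n} (hb : b ∈ gI (gX k d n N) d) :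
    cf (Nv d N) b = 0 := by
  ext c
  rw [coeff_cf, coeff_zero]
  by_contra hc
  obtain ⟨i, _, hi⟩ := (mem_gX le_rfl).1 hb _ (mem_support_iff.2 hc)
  simp [Nv] at hi
  omega

lemma mem_gI_of_cf {N : ℕ} {t : B k d n} (h : ∀ a ≤ Nv d N, cf a t = 0) :
    t ∈ gI (gX k d n N) d := by
  rw [mem_gX le_rfl]
  intro c hc
  by_contra hcon
  push Not at hcon
  set a : Fin d →₀ ℕ := Finsupp.equivFunOnFinite.symm fun i => c (Sum.inl i) with ha
  set e : Fin n →₀ ℕ := Finsupp.equivFunOnFinite.symm fun i => c (Sum.inr i) with he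
  have h1 := h a (fun i => by
    have := hcon i i.2
    simp [Nv, ha]; omega)
  have h2 := coeff_cf a e t
  rw [h1, coeff_zero] at h2
  apply mem_support_iff.1 hc
  rw [h2]
  congr 1
  ext (i | i) <;> simp [ha, he]

lemma mem_gI_of_resl {N : ℕ} {t : B k d n} (h : ∀ b, resl N t b = 0) :
    t ∈ gI (gX k d n N) d := by
  refine mem_gI_of_cf fun a ha => ?_
  rw [← cf_mul_xm a (Nv d N - a), add_tsub_cancel_of_le ha]
  exact h _

/-- The element representing a functional. -/
def rep (N : ℕ) (ψ : B k d n →ₗ[T k n] T k n) : B k d n :=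
  ∑ a ∈ Finset.Iic (Nv d N), ψ (xm a) • xm (Nv d N - a)

lemma resl_rep {N : ℕ} (hN : 1 ≤ N) (ψ : B k d n →ₗ[T k n] T k n)
    (hψ : ∀ i b, ψ (X (Sum.inl i) ^ N * b) = 0) : resl N (rep N ψ) = ψ := by
  classical
  refine T_ext fun a' => ?_
  rw [resl_apply]
  by_cases ha' : a' ≤ Nv d N
  · rw [rep, Finset.sum_mul, map_sum, Finset.sum_eq_single a']
    · rw [smul_mul_assoc, map_smul, ← xm_add, cf_xm, if_pos (tsub_add_cancel_of_le ha'), smul_eq_mul,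
        mul_one]
    · intro a ha hne
      rw [smul_mul_assoc, map_smul, ← xm_add, cf_xm, if_neg, smul_zero]
      intro h
      apply hne
      have h2 := tsub_add_cancel_of_le (Finset.mem_Iic.1 ha)
      rw [← h2] at h
      have h3 : Nv d N - a + a = Nv d N := h2
      rw [h3] at h
      exact (add_left_cancel (h.trans h3.symm)).symm
    · intro h
      exact absurd (Finset.mem_Iic.2 ha') h
  · have : ∃ i, N ≤ a' i := by
      by_contra hcon
      push Not at hcon
      exact ha' fun i => by have := hcon i; simp [Nv]; omega
    obtain ⟨i, hi⟩ := this
    have e : (xm a' : B k d n) = X (Sum.inl i) ^ N * xm (a' - Finsupp.single i N) := by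
      rw [Xpow_eq, ← xm_add, add_tsub_cancel_of_le (Finsupp.single_le_iff.2 hi)]
    rw [e, hψ]
    refine cf_Nv_gI hN (Ideal.mul_mem_left _ _ (Ideal.mul_mem_right _ _ ?_))
    have := g_mem_gI (g := gX k d n N) i.2
    simpa [gX] using this

lemma cf_hom {b : B k d n} {P Q : ℤ} (hb : IsWeightedHomogeneous (wZ d n) b (P, Q))
    (a : Fin d →₀ ℕ) :
    cf a b ∈ TcompZ k n Q ∧ (((∑ i, a i : ℕ) : ℤ) ≠ P → cf a b = 0) := by
  have key : ∀ c, coeff c (cf a b) ≠ 0 →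
      ((∑ i, a i : ℕ) : ℤ) = P ∧ ((∑ j, c j : ℕ) : ℤ) = Q := by
    intro c hc
    rw [coeff_cf] at hc
    have := hb hc
    rw [weight_wZ] at this
    simpa only [Finsupp.sumElim_inl, Finsupp.sumElim_inr, Prod.mk.injEq] using this
  constructor
  · unfold TcompZ
    split_ifs with hQ
    · intro c hc
      have := (key c hc).2
      rw [Finsupp.weight_apply, Finsupp.sum_fintype _ _ (by simp)]
      simp only [Pi.one_apply, smul_eq_mul, mul_one]
      omega
    · rw [Submodule.mem_bot]
      ext c
      by_contra hc
      have := (key c (by simpa using hc)).2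
      omega
  · intro hP
    ext c
    by_contra hc
    exact hP (key c (by simpa using hc)).1

lemma hom_algebraMap {t : T k n} {Q : ℤ} (ht : t ∈ TcompZ k n Q) :
    IsWeightedHomogeneous (wZ d n) (algebraMap (T k n) (B k d n) t) (0, Q) := by
  intro c hc
  change coeff c (rename Sum.inr t) ≠ 0 at hc
  rw [weight_wZ]
  obtain ⟨u, rfl, hu⟩ := coeff_rename_ne_zero _ _ _ hc
  unfold TcompZ at ht
  split_ifs at ht with hQ
  · have h1 := ht hu
    rw [Finsupp.weight_apply, Finsupp.sum_fintype _ _ (by simp)] at h1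
    simp only [Pi.one_apply, smul_eq_mul, mul_one] at h1
    ext
    · simp only
      norm_cast
      refine Finset.sum_eq_zero fun i _ => ?_
      exact Finsupp.mapDomain_of_notMem_range _ _ (by simp)
    · simp only [Finsupp.mapDomain_apply Sum.inr_injective]
      omega
  · rw [Submodule.mem_bot] at ht
    simp [ht] at hu

lemma hom_xm (a : Fin d →₀ ℕ) :
    IsWeightedHomogeneous (wZ d n) (xm a : B k d n) (((∑ i, a i : ℕ) : ℤ), 0) := by
  apply isWeightedHomogeneous_monomial
  rw [weight_wZ]
  ext
  · simp only [Finsupp.mapDomain_apply Sum.inl_injective]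
  · simp only
    norm_cast
    refine Finset.sum_eq_zero fun i _ => ?_
    exact Finsupp.mapDomain_of_notMem_range _ _ (by simp)

lemma Nv_sum {N : ℕ} (hN : 1 ≤ N) : ((∑ i, Nv d N i : ℕ) : ℤ) = d * (N - 1) := by
  simp [Nv]
  left
  omega

lemma rep_hom {N : ℕ} (hN : 1 ≤ N) (ψ : B k d n →ₗ[T k n] T k n) (u v : ℤ)
    (h : ∀ a, ψ (xm a) ∈ TcompZ k n v ∧ (((∑ i, a i : ℕ) : ℤ) + u ≠ 0 → ψ (xm a) = 0)) :
    IsWeightedHomogeneous (wZ d n) (rep N ψ) (d * (N - 1) + u, v) := by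
  refine IsWeightedHomogeneous.sum _ _ _ fun a ha => ?_
  by_cases hu : ((∑ i, a i : ℕ) : ℤ) + u = 0
  · rw [Algebra.smul_def]
    have := (hom_algebraMap (d := d) (h a).1).mul (hom_xm (k := k) (n := n) (Nv d N - a))
    convert this using 1
    have h1 : (∑ i, (Nv d N - a) i) + ∑ i, a i = ∑ i, Nv d N i := by
      rw [← Finset.sum_add_distrib]
      refine Finset.sum_congr rfl fun i _ => ?_
      exact tsub_add_cancel_of_le (Finset.mem_Iic.1 ha i)
    have h2 := Nv_sum (d := d) hN
    ext
    · simp only [Prod.fst_add, zero_add]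
      omega
    · simp
  · rw [(h a).2 hu, zero_smul]
    exact isWeightedHomogeneous_zero k _ _

end Coeffs

/-! ### Translating the hypotheses -/

section Hyp

variable {k d n}

/-- The sequence `f`, extended by zero. -/
def fF (f : Fin d → B k d n) (i : ℕ) : B k d n := if h : i < d then f ⟨i, h⟩ else 0

lemma gI_fF (f : Fin d → B k d n) (m : ℕ) (hm : m ≤ d) :
    gI (fF f) m = Ideal.ofList ((List.ofFn f).take m) := by
  unfold gI Ideal.ofList
  congr 1
  ext y
  simp only [Set.mem_image, Set.mem_Iio]
  change _ ↔ y ∈ (List.ofFn f).take m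
  rw [List.mem_take_iff_getElem]
  constructor
  · rintro ⟨i, hi, rfl⟩
    exact ⟨i, by simp; omega, by simp [fF, show i < d by omega]⟩
  · rintro ⟨i, hi, rfl⟩
    simp at hi
    exact ⟨i, hi.1, by simp [fF, show i < d by omega]⟩

lemma gI_fF_top (f : Fin d → B k d n) : gI (fF f) d = Ideal.span (Set.range f) := by
  unfold gI
  congr 1
  ext y
  simp only [Set.mem_image, Set.mem_Iio, Set.mem_range]
  constructor
  · rintro ⟨i, hi, rfl⟩
    exact ⟨⟨i, hi⟩, by simp [fF, hi]⟩
  · rintro ⟨i, rfl⟩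
    exact ⟨i, i.2, by simp [fF]⟩

lemma fF_reg (f : Fin d → B k d n)
    (hreg : RingTheory.Sequence.IsRegular (B k d n) (List.ofFn f)) : RegSeq (fF f) d := by
  intro i hi b hb
  have h := hreg.regular_mod_prev i (by simpa using hi)
  rw [gI_fF f i hi.le] at hb ⊢
  have e : (Ideal.ofList ((List.ofFn f).take i) • ⊤ : Submodule (B k d n) (B k d n))
      = Ideal.ofList ((List.ofFn f).take i) := by simp
  rw [e] at h
  rw [← Ideal.Quotient.eq_zero_iff_mem] at hb ⊢
  have h0 := (isSMulRegular_iff_right_eq_zero_of_smul.1 h) (Submodule.Quotient.mk b)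
  refine h0 ?_
  rw [← Submodule.Quotient.mk_smul]
  simpa [fF, hi] using hb

end Hyp

/-! ### Local cohomology -/

section LC

variable {k d n I}

lemma mem_H0_of_pow {s : B k d n ⧸ I} (N : ℕ)
    (h : ∀ i : Fin d, (X (Sum.inl i) ^ N : B k d n) • s = 0) : s ∈ H0 k d n I := by
  set J : Ideal (B k d n) := Ideal.span (Set.range fun i : Fin d => (X (Sum.inl i) : B k d n) ^ N)
  have h1 : mxB k d n ≤ J.radical := by
    unfold mxB
    rw [Ideal.span_le]
    rintro _ ⟨i, rfl⟩
    exact ⟨N, Ideal.subset_span ⟨i, rfl⟩⟩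
  obtain ⟨M, hM⟩ := Ideal.exists_pow_le_of_le_radical_of_fg h1 (IsNoetherian.noetherian _)
  have h2 : J ≤ LinearMap.ker (LinearMap.toSpanSingleton (B k d n) (B k d n ⧸ I) s) := by
    refine Ideal.span_le.2 ?_
    rintro _ ⟨i, rfl⟩
    exact h i
  refine (le_iSup (fun N : ℕ => Submodule.torsionBySet (B k d n) (B k d n ⧸ I)
    ((mxB k d n ^ N : Ideal (B k d n)) : Set (B k d n))) M) ?_
  rw [Submodule.mem_torsionBySet_iff]
  rintro ⟨a, ha⟩
  exact h2 (hM ha)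

variable (k d n I) in
lemma exists_pow_H0 : ∃ N0 : ℕ, 1 ≤ N0 ∧ ∀ s ∈ H0 k d n I, ∀ i : Fin d,
    (X (Sum.inl i) ^ N0 : B k d n) • s = 0 := by
  have hmono : Monotone (fun N : ℕ => Submodule.torsionBySet (B k d n) (B k d n ⧸ I)
      ((mxB k d n ^ N : Ideal (B k d n)) : Set (B k d n))) := by
    intro a b hab
    exact Submodule.torsionBySet_le_torsionBySet_of_subset (Ideal.pow_le_pow_right hab)
  obtain ⟨N, hN⟩ := monotone_stabilizes_iff_noetherian.2
    (inferInstance : IsNoetherian (B k d n) (B k d n ⧸ I)) ⟨_, hmono⟩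
  refine ⟨N + 1, by omega, fun s hs i => ?_⟩
  have h1 : H0 k d n I ≤ Submodule.torsionBySet (B k d n) (B k d n ⧸ I)
      ((mxB k d n ^ (N + 1) : Ideal (B k d n)) : Set (B k d n)) := by
    refine iSup_le fun M => ?_
    rcases le_total M (N + 1) with h | h
    · exact hmono h
    · have h2 := hN M (by omega)
      have h3 := hN (N + 1) (by omega)
      exact (h2.symm.trans h3).le
  have hX : (X (Sum.inl i) : B k d n) ∈ mxB k d n := Ideal.subset_span ⟨i, rfl⟩
  exact (Submodule.mem_torsionBySet_iff _ _).1 (h1 hs)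
    ⟨X (Sum.inl i) ^ (N + 1), Ideal.pow_mem_pow hX _⟩

end LC

/-! ### Linear relations -/

section Rel

lemma exists_equiv_of_rel {A M N : Type} [CommRing A] [AddCommGroup M] [AddCommGroup N]
    [Module A M] [Module A N] (Γ : M → N → Prop)
    (hadd : ∀ x y x' y', Γ x y → Γ x' y' → Γ (x + x') (y + y'))
    (hsmul : ∀ (a : A) x y, Γ x y → Γ (a • x) (a • y))
    (hl : ∀ x, ∃ y, Γ x y) (hr : ∀ y, ∃ x, Γ x y)
    (h0l : ∀ y, Γ 0 y → y = 0) (h0r : ∀ x, Γ x 0 → x = 0) :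
    ∃ e : M ≃ₗ[A] N, ∀ x y, Γ x y ↔ e x = y := by
  have hneg : ∀ x y, Γ x y → Γ (-x) (-y) := fun x y h => by
    have := hsmul (-1) x y h
    simpa using this
  have hu : ∀ x y y', Γ x y → Γ x y' → y = y' := fun x y y' h h' => by
    have := hadd _ _ _ _ h (hneg _ _ h')
    rw [add_neg_cancel] at this
    have := h0l _ this
    rwa [← sub_eq_add_neg, sub_eq_zero] at this
  have hu' : ∀ x x' y, Γ x y → Γ x' y → x = x' := fun x x' y h h' => by
    have := hadd _ _ _ _ h (hneg _ _ h')
    rw [add_neg_cancel] at this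
    have := h0r _ this
    rwa [← sub_eq_add_neg, sub_eq_zero] at this
  choose F hF using hl
  let L : M →ₗ[A] N :=
    { toFun := F
      map_add' := fun x y => hu _ _ _ (hF _) (hadd _ _ _ _ (hF x) (hF y))
      map_smul' := fun a x => hu _ _ _ (hF _) (hsmul a _ _ (hF x)) }
  have hb : Function.Bijective L := by
    constructor
    · intro x x' h
      have h1 := hF x'
      have : F x = F x' := h
      rw [← this] at h1
      exact hu' _ _ _ (hF x) h1
    · intro y
      obtain ⟨x, hx⟩ := hr y
      exact ⟨x, hu _ _ _ (hF x) hx⟩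
  refine ⟨LinearEquiv.ofBijective L hb, fun x y => ⟨fun h => ?_, fun h => ?_⟩⟩
  · exact hu _ _ _ (hF x) h
  · have : F x = y := h
    rw [← this]
    exact hF x

end Rel

/-! ### Functionals are killed by a power of the variables -/

section Kill

variable {k d n}

lemma compX_neg {q : ℤ} (hq : q < 0) (b : B k d n) :
    weightedHomogeneousComponent (wX d n) q b = 0 := by
  classical
  ext c
  rw [coeff_weightedHomogeneousComponent, if_neg, coeff_zero]
  rw [weight_wX]
  omega

lemma gX_eq (N : ℕ) (i : Fin d) : gX k d n N i = X (Sum.inl i) ^ N := by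
  simp [gX]

lemma map_algebraMap_mul (ψ : B k d n →ₗ[T k n] T k n) (t : T k n) (b : B k d n) :
    ψ (algebraMap (T k n) (B k d n) t * b) = t * ψ b := by
  rw [← Algebra.smul_def, map_smul, smul_eq_mul]

/-- If `ψ` kills `(f)` then `f_j` times its representative is zero modulo `(x^N)`. -/
lemma mul_rep_mem {F : ℕ → B k d n} {N : ℕ} (hN : 1 ≤ N) (ψ : B k d n →ₗ[T k n] T k n)
    (hψ : ∀ i b, ψ (X (Sum.inl i) ^ N * b) = 0) (hψF : ∀ b ∈ gI F d, ψ b = 0) (j : ℕ) (hj : j < d) :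
    F j * rep N ψ ∈ gI (gX k d n N) d := by
  refine mem_gI_of_resl fun b => ?_
  have h := DFunLike.congr_fun (resl_rep hN ψ hψ) (F j * b)
  rw [resl_apply] at h ⊢
  rw [mul_comm (F j), mul_assoc, h]
  exact hψF _ (Ideal.mul_mem_right _ _ (g_mem_gI hj))

lemma kill_one {F : ℕ → B k d n} (hF : RegSeq F d) {N0 : ℕ}
    (hN0 : ∀ s N, (∀ i : Fin d, X (Sum.inl i) ^ N * s ∈ gI F d) →
      ∀ i : Fin d, X (Sum.inl i) ^ N0 * s ∈ gI F d)
    {N : ℕ} (hN : 1 ≤ N) (ψ : B k d n →ₗ[T k n] T k n)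
    (hψ : ∀ i b, ψ (X (Sum.inl i) ^ N * b) = 0) (hψF : ∀ b ∈ gI F d, ψ b = 0)
    (i : Fin d) (b : B k d n) : ψ (X (Sum.inl i) ^ N0 * b) = 0 := by
  obtain ⟨K⟩ := exists_kos (gX k d n N) ⊤ d (fun _ _ => trivial) (gX_reg N)
  obtain ⟨s, hs⟩ := K.sig_d hF (mul_rep_mem hN ψ hψ hψF)
  have h1 := hN0 s N (fun i => by
    have := (K.sig_e hF hs).1 i i.2
    rwa [gX_eq] at this) i
  have h2 := K.sig_b hF (K.sig_smul (X (Sum.inl i) ^ N0) hs) h1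
  rw [← resl_rep hN ψ hψ, resl_apply]
  refine cf_Nv_gI hN ?_
  have := Ideal.mul_mem_right b _ h2
  convert this using 1
  ring

/-- The functional `b ↦ ψ(b_p)`. -/
def compFun (ψ : B k d n →ₗ[T k n] T k n) (p : ℤ) : B k d n →ₗ[T k n] T k n where
  toFun b := ψ (weightedHomogeneousComponent (wX d n) p b)
  map_add' a b := by rw [map_add, map_add]
  map_smul' t b := by
    have := comp_mul (wX d n) (homX_inr (d := d) t) p b
    rw [add_zero] at this
    rw [Algebra.smul_def, this, map_algebraMap_mul]
    rfl

lemma kill_all {F : ℕ → B k d n} (hF : RegSeq F d) (φ : ℕ → ℤ)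
    (hFX : ∀ i < d, IsWeightedHomogeneous (wX d n) (F i) (φ i)) {N0 : ℕ}
    (hN0 : ∀ s N, (∀ i : Fin d, X (Sum.inl i) ^ N * s ∈ gI F d) →
      ∀ i : Fin d, X (Sum.inl i) ^ N0 * s ∈ gI F d)
    (ψ : B k d n →ₗ[T k n] T k n) (hψF : ∀ b ∈ gI F d, ψ b = 0)
    (i : Fin d) (b : B k d n) : ψ (X (Sum.inl i) ^ N0 * b) = 0 := by
  have key : ψ.comp (LinearMap.mulLeft (T k n) (X (Sum.inl i) ^ N0)) = 0 := by
    refine T_ext fun a => ?_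
    change ψ (X (Sum.inl i) ^ N0 * xm a) = 0
    rw [Xpow_eq, ← xm_add]
    set a' := Finsupp.single i N0 + a
    set p : ℤ := ((∑ i, a' i : ℕ) : ℤ) with hp
    have h1 := kill_one hF hN0 (N := (p.toNat + 1)) (by omega) (compFun ψ p) (fun i b => by
        change ψ (weightedHomogeneousComponent (wX d n) p _) = 0
        have hX := homX_of_homZ (gX_hom (k := k) (d := d) (n := n) (p.toNat + 1) i)
        rw [gX_eq] at hX
        have h2 := comp_mul (wX d n) hX (p - (p.toNat + 1 : ℕ)) b
        rw [compX_neg (q := p - (p.toNat + 1 : ℕ)) (by omega), mul_zero] at h2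
        simp only [sub_add_cancel] at h2
        rw [h2, map_zero])
      (fun b hb => hψF _ (comp_mem_gI (wX d n) F φ d hFX p b hb)) i (xm a)
    rw [Xpow_eq, ← xm_add] at h1
    change ψ (weightedHomogeneousComponent (wX d n) p (xm a')) = 0 at h1
    rwa [(homX_of_homZ (hom_xm a')).weightedHomogeneousComponent_same] at h1
  exact DFunLike.congr_fun key b

end Kill

/-! ### The duality -/

section Dual

variable {k d n I}

lemma lift_fun (ψ : B k d n →ₗ[T k n] T k n) (hψ : ∀ b ∈ I, ψ b = 0) :
    ∃ φ : (B k d n ⧸ I) →ₗ[T k n] T k n, ∀ b, φ (Ideal.Quotient.mk I b) = ψ b := by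
  have hs : ∀ x : B k d n ⧸ I, ∃ b, Ideal.Quotient.mk I b = x := Ideal.Quotient.mk_surjective
  choose g hg using hs
  have hu : ∀ b c, Ideal.Quotient.mk I b = Ideal.Quotient.mk I c → ψ b = ψ c := fun b c h => by
    rw [← sub_eq_zero, ← map_sub]
    exact hψ _ (Ideal.Quotient.eq.1 h)
  refine ⟨{ toFun := fun x => ψ (g x), map_add' := fun x y => ?_, map_smul' := fun t x => ?_ },
    fun b => hu _ _ (hg _)⟩
  · rw [← map_add]
    exact hu _ _ (by rw [hg, map_add, hg, hg])
  · rw [RingHom.id_apply, ← map_smul]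
    refine hu _ _ ?_
    rw [hg]
    conv_lhs => rw [← hg x]
    rfl

/-- Composition of a functional on `S` with `B → S`. -/
def pull (φ : (B k d n ⧸ I) →ₗ[T k n] T k n) : B k d n →ₗ[T k n] T k n where
  toFun b := φ (Ideal.Quotient.mk I b)
  map_add' a b := by rw [map_add, map_add]
  map_smul' t b := by
    rw [RingHom.id_apply, ← map_smul]
    rfl

lemma pull_apply (φ : (B k d n ⧸ I) →ₗ[T k n] T k n) (b : B k d n) :
    pull φ b = φ (Ideal.Quotient.mk I b) := rfl

lemma smul_mk (a b : B k d n) :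
    a • (Ideal.Quotient.mk I b) = Ideal.Quotient.mk I (a * b) := rfl

lemma resl_zero {N : ℕ} (hN : 1 ≤ N) {t : B k d n} (ht : t ∈ gI (gX k d n N) d) (b : B k d n) :
    resl N t b = 0 := by
  rw [resl_apply]
  exact cf_Nv_gI hN (Ideal.mul_mem_right _ _ ht)

lemma Kos.sig_sub {g : ℕ → B k d n} {H : AddSubgroup (B k d n)} (K : Kos g d H)
    {F : ℕ → B k d n} {s t s' t' : B k d n} (h : K.sig F s t) (h' : K.sig F s' t') :
    K.sig F (s - s') (t - t') := by
  have := K.sig_add h (K.sig_smul (-1) h')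
  simpa [sub_eq_add_neg] using this

/-- Exponents of the power of the variables. -/
def HN (N : ℕ) : AddSubgroup (B k d n) :=
  (weightedHomogeneousSubmodule k (wZ d n) ((N : ℤ), 0)).toAddSubgroup

/-- The relation defining the duality isomorphism. -/
def Gam {N : ℕ} (K : Kos (gX k d n N) d (HN N)) (F : ℕ → B k d n) (x : H0 k d n I)
    (φ : (B k d n ⧸ I) →ₗ[T k n] T k n) : Prop :=
  ∃ s t, Ideal.Quotient.mk I s = (x : B k d n ⧸ I) ∧ K.sig F s t ∧
    ∀ b, φ (Ideal.Quotient.mk I b) = resl N t b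

lemma mem_J {F : ℕ → B k d n} (hJ : gI F d = I) {b : B k d n} :
    b ∈ gI F d ↔ Ideal.Quotient.mk I b = 0 := by
  rw [Ideal.Quotient.eq_zero_iff_mem, hJ]

lemma exists_dual {F : ℕ → B k d n} (hF : RegSeq F d) (hJ : gI F d = I) (φ : ℕ → ℤ)
    (hFX : ∀ i < d, IsWeightedHomogeneous (wX d n) (F i) (φ i)) {N : ℕ} (hN : 1 ≤ N)
    (hN0 : ∀ s ∈ H0 k d n I, ∀ i : Fin d, (X (Sum.inl i) ^ N : B k d n) • s = 0)
    (K : Kos (gX k d n N) d (HN N)) :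
    (∀ (θ : (B k d n ⧸ I) →ₗ[T k n] T k n) i b, pull θ (X (Sum.inl i) ^ N * b) = 0) ∧
    ∃ e : H0 k d n I ≃ₗ[B k d n] ((B k d n ⧸ I) →ₗ[T k n] T k n),
      ∀ x θ, Gam K F x θ ↔ e x = θ := by
  have hH : ∀ s M, (∀ i : Fin d, X (Sum.inl i) ^ M * s ∈ gI F d) →
      Ideal.Quotient.mk I s ∈ H0 k d n I := by
    intro s M h
    refine mem_H0_of_pow M fun i => ?_
    rw [smul_mk]
    exact (mem_J hJ).1 (h i)
  have hH2 : ∀ s, Ideal.Quotient.mk I s ∈ H0 k d n I →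
      ∀ i : Fin d, X (Sum.inl i) ^ N * s ∈ gI F d := by
    intro s hs i
    rw [mem_J hJ, ← smul_mk]
    exact hN0 _ hs i
  have hk : ∀ (θ : (B k d n ⧸ I) →ₗ[T k n] T k n), ∀ b ∈ gI F d, pull θ b = 0 := by
    intro θ b hb
    rw [pull_apply, (mem_J hJ).1 hb, map_zero]
  have hkill : ∀ (θ : (B k d n ⧸ I) →ₗ[T k n] T k n) i b,
      pull θ (X (Sum.inl i) ^ N * b) = 0 := fun θ i b =>
    kill_all hF φ hFX (fun s M h => hH2 s (hH s M h)) (pull θ) (hk θ) i b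
  refine ⟨hkill, exists_equiv_of_rel (Gam K F) ?_ ?_ ?_ ?_ ?_ ?_⟩
  · rintro x y x' y' ⟨s, t, h1, h2, h3⟩ ⟨s', t', h1', h2', h3'⟩
    refine ⟨s + s', t + t', ?_, K.sig_add h2 h2', fun b => ?_⟩
    · rw [map_add, h1, h1']; rfl
    · rw [LinearMap.add_apply, h3, h3', resl_apply, resl_apply, resl_apply, add_mul, map_add]
  · rintro a x y ⟨s, t, h1, h2, h3⟩
    refine ⟨a * s, a * t, ?_, K.sig_smul a h2, fun b => ?_⟩
    · rw [← smul_mk, h1]; rfl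
    · change y (Ideal.Quotient.mk I a * Ideal.Quotient.mk I b) = _
      rw [← map_mul, h3, resl_apply, resl_apply]
      congr 1
      ring
  · rintro ⟨x, hx⟩
    obtain ⟨s, rfl⟩ := Ideal.Quotient.mk_surjective x
    obtain ⟨t, ht⟩ := K.sig_a hF (s := s) (fun j hj => by
      have := hH2 s hx ⟨j, hj⟩
      rwa [← gX_eq] at this)
    obtain ⟨θ, hθ⟩ := lift_fun (I := I) (resl N t) (fun b hb => by
      rw [← hJ] at hb
      rw [resl_apply]
      refine cf_Nv_gI hN ?_
      have : gI F d ≤ Submodule.comap (LinearMap.mulLeft (B k d n) t) (gI (gX k d n N) d) := by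
        refine Ideal.span_le.2 ?_
        rintro _ ⟨j, hj, rfl⟩
        have := (K.sig_e hF ht).2 j hj
        rw [mul_comm] at this
        exact this
      exact this hb)
    exact ⟨θ, s, t, rfl, ht, hθ⟩
  · intro θ
    obtain ⟨s, hs⟩ := K.sig_d hF (mul_rep_mem hN (pull θ) (hkill θ) (hk θ))
    refine ⟨⟨Ideal.Quotient.mk I s, hH s N fun i => ?_⟩, s, _, rfl, hs, fun b => ?_⟩
    · have := (K.sig_e hF hs).1 i i.2
      rwa [gX_eq] at this
    · rw [resl_rep hN (pull θ) (hkill θ)]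
      rfl
  · rintro y ⟨s, t, h1, h2, h3⟩
    have h4 := resl_zero hN (K.sig_b hF h2 ((mem_J hJ).2 h1))
    ext x
    obtain ⟨b, rfl⟩ := Ideal.Quotient.mk_surjective x
    rw [h3, h4]
    rfl
  · rintro ⟨x, hx⟩ ⟨s, t, h1, h2, h3⟩
    have h4 := K.sig_c hF h2 (mem_gI_of_resl fun b => (h3 b).symm)
    ext
    change x = 0
    exact h1.symm.trans ((mem_J hJ).1 h4)

end Dual

/-- **Duality theorem** (Jouanolou; Kustin–Polini–Ulrich).  There is a bihomogeneous
isomorphism of `B`-modules `H⁰_m(S) ≅ Hom_T(S,T)(−δ,−τ)`: a `B`-linear isomorphism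
which, for every bidegree `(a,b)`, identifies the `(a,b)`-component of `H⁰_m(S)` with the
`(a−δ, b−τ)`-component of `Hom_T(S,T)`. -/
theorem duality
    (f : Fin d → B k d n) (α β : Fin d → ℕ)
    (hfm : ∀ i, f i ∈ mxB k d n)
    (hreg : RingTheory.Sequence.IsRegular (B k d n) (List.ofFn f))
    (hbihom : ∀ i, f i ∈ weightedHomogeneousSubmodule k (bwt d n) (α i, β i))
    (hne : ∀ i, f i ≠ 0)
    (hI : I = Ideal.span (Set.range f))
    (δ τ : ℤ) (hδ : δ = (∑ i, (α i : ℤ)) - d) (hτ : τ = ∑ i, (β i : ℤ)) :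
    ∃ e : H0 k d n I ≃ₗ[B k d n] ((B k d n ⧸ I) →ₗ[T k n] T k n),
      (∀ (a b : ℕ) (s : H0 k d n I), (s : B k d n ⧸ I) ∈ Scomp k d n I (a, b) →
        e s ∈ HomComp k d n I ((a : ℤ) - δ) ((b : ℤ) - τ)) ∧
      (∀ (a b : ℕ) (φ : (B k d n ⧸ I) →ₗ[T k n] T k n),
        φ ∈ HomComp k d n I ((a : ℤ) - δ) ((b : ℤ) - τ) →
        ((e.symm φ : H0 k d n I) : B k d n ⧸ I) ∈ Scomp k d n I (a, b)) := by
  classical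
  set φZ : ℕ → ℤ × ℤ := fun i => if h : i < d then ((α ⟨i, h⟩ : ℤ), (β ⟨i, h⟩ : ℤ)) else 0 with hφZ
  have hF : RegSeq (fF f) d := fF_reg f hreg
  have hJ : gI (fF f) d = I := by rw [gI_fF_top, hI]
  have hFZ : ∀ i < d, IsWeightedHomogeneous (wZ d n) (fF f i) (φZ i) := by
    intro i hi
    have := homZ_iff.1 (hbihom ⟨i, hi⟩)
    simpa [fF, hφZ, hi] using this
  obtain ⟨N, hN, hN0⟩ := exists_pow_H0 k d n I
  obtain ⟨K⟩ := exists_kos (gX k d n N) (HN N) d (fun i _ => gX_hom N i) (gX_reg N)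
  obtain ⟨hkill, e, he⟩ := exists_dual hF hJ (fun i => (φZ i).1)
    (fun i hi => homX_of_homZ (hFZ i hi)) hN hN0 K
  have hsum : ∀ a b : ℕ, (((a : ℤ), (b : ℤ)) + d • (((N : ℤ), (0 : ℤ)))
      - ∑ i ∈ Finset.range d, φZ i) = ((d : ℤ) * (N - 1) + (a - δ), (b : ℤ) - τ) := by
    intro a b
    rw [Finset.sum_range, hδ, hτ]
    ext
    · simp [hφZ, Prod.fst_sum]
      ring
    · simp [hφZ, Prod.snd_sum]
  have hcomp : ∀ (a b : ℕ) (s t : B k d n), K.sig (fF f) s t →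
      K.sig (fF f) (weightedHomogeneousComponent (wZ d n) ((a : ℤ), (b : ℤ)) s)
        (weightedHomogeneousComponent (wZ d n)
          ((d : ℤ) * (N - 1) + (a - δ), (b : ℤ) - τ) t) := by
    intro a b s t h
    have := K.sig_comp (fun p => (weightedHomogeneousComponent (wZ d n) p).toAddMonoidHom)
      ((N : ℤ), (0 : ℤ)) φZ (fun h hh p b => comp_mul (wZ d n) hh p b)
      (fun i hi p b => comp_mul (wZ d n) (hFZ i hi) p b)
      (fun i hi p b hb => comp_mem_gI (wZ d n) (fF f) φZ i
        (fun j hj => hFZ j (by omega)) p b hb) h ((a : ℤ), (b : ℤ))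
    rw [hsum] at this
    exact this
  refine ⟨e, ?_, ?_⟩
  · intro a b x hx
    obtain ⟨s, t, h1, h2, h3⟩ := (he x _).2 rfl
    obtain ⟨s', hs', hsx⟩ := hx
    have hsx : Ideal.Quotient.mk I s' = (x : B k d n ⧸ I) := hsx
    have h4 := hcomp a b s t h2
    have h5 : s - weightedHomogeneousComponent (wZ d n) ((a : ℤ), (b : ℤ)) s ∈ gI (fF f) d := by
      have h6 : s - s' ∈ gI (fF f) d := by
        rw [mem_J hJ, map_sub, h1, hsx, sub_self]
      have h7 := comp_mem_gI (wZ d n) (fF f) φZ d hFZ ((a : ℤ), (b : ℤ)) _ h6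
      rw [map_sub, (homZ_iff.1 hs').weightedHomogeneousComponent_same] at h7
      have := Ideal.sub_mem _ h6 h7
      convert this using 1
      ring
    have h8 := resl_zero hN (K.sig_b hF (K.sig_sub h2 h4) h5)
    rintro p q y ⟨c, hc, rfl⟩
    have hy : (e x) ((Ideal.Quotient.mkₐ k I).toLinearMap c) = cf (Nv d N)
        (weightedHomogeneousComponent (wZ d n)
          ((d : ℤ) * (N - 1) + (a - δ), (b : ℤ) - τ) t * c) := by
      have h9 := h8 c
      rw [resl_apply, sub_mul, map_sub, sub_eq_zero] at h9
      rw [← h9]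
      exact h3 c
    rw [hy]
    have h10 := cf_hom ((weightedHomogeneousComponent_isWeightedHomogeneous
      ((d : ℤ) * (N - 1) + ((a : ℤ) - δ), (b : ℤ) - τ) t).mul
      (homZ_iff.1 hc)) (Nv d N)
    constructor
    · have := h10.1
      rwa [add_comm] at this
    · intro hne
      refine h10.2 ?_
      rw [Nv_sum hN]
      intro h
      apply hne
      linarith
  · intro a b φ hφ
    have ht := rep_hom hN (pull φ) ((a : ℤ) - δ) ((b : ℤ) - τ) (fun c => by
      have h := hφ (∑ i, c i) 0 (Ideal.Quotient.mk I (xm c))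
        ⟨xm c, homZ_iff.2 (by simpa using hom_xm c), rfl⟩
      refine ⟨?_, h.2⟩
      have := h.1
      rwa [Nat.cast_zero, zero_add] at this)
    have hFt : ∀ j < d, fF f j * rep N (pull φ) ∈ gI (gX k d n N) d :=
      mul_rep_mem hN (pull φ) (hkill φ) (fun c hc => by
        rw [pull_apply, (mem_J hJ).1 hc, map_zero])
    obtain ⟨s, hs⟩ := K.sig_d hF hFt
    have h4 := hcomp a b s _ hs
    rw [ht.weightedHomogeneousComponent_same] at h4
    obtain ⟨s', t', h1, h2, h3⟩ := (he (e.symm φ) φ).2 (e.apply_symm_apply φ)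
    have h5 : s' - weightedHomogeneousComponent (wZ d n) ((a : ℤ), (b : ℤ)) s ∈ gI (fF f) d := by
      refine K.sig_c hF (K.sig_sub h2 h4) (mem_gI_of_resl fun c => ?_)
      have h6 := DFunLike.congr_fun (resl_rep hN (pull φ) (hkill φ)) c
      have h7 := h3 c
      rw [resl_apply] at h6 h7 ⊢
      rw [sub_mul, map_sub, h6, ← h7, pull_apply, sub_self]
    refine ⟨weightedHomogeneousComponent (wZ d n) ((a : ℤ), (b : ℤ)) s,
      homZ_iff.2 (weightedHomogeneousComponent_isWeightedHomogeneous _ s), ?_⟩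
    rw [mem_J hJ, map_sub, sub_eq_zero] at h5
    rw [← h1]
    exact h5.symm

end Stmt0
end
end

section
/- Let k be a field, R = k[x_1,…,x_d], T = k[y_1,…,y_n], and B = R ⊗_k T, bigraded by bideg x_i = (1,0) and bideg y_j = (0,1). Let f_1,…,f_d be a B-regular sequence of bihomogeneous elements contained in m = (x_1,…,x_d)B with bideg f_i = (α_i,β_i), set S = B/(f_1,…,f_d), δ = (Σα_i) − d, τ = Σβ_i, and A = H^0_m(S). Then for every integer i there is a graded isomorphism of T-modules A_i ≅ Hom_T(S_{δ−i}, T(−τ)). -/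
/-!
STATEMENT 2: With `B = k[x_1,…,x_d] ⊗_k k[y_1,…,y_n]` bigraded as usual,
`f_1,…,f_d ⊆ m = (x_1,…,x_d)B` a bihomogeneous `B`-regular sequence with
`bideg f_i = (α_i, β_i)`, `S = B/(f_1,…,f_d)`, `δ = (Σα_i) − d`, `τ = Σβ_i` and
`A = H⁰_m(S)`, for every integer `i` there is a graded isomorphism of `T`-modules
`A_i ≅ Hom_T(S_{δ−i}, T(−τ))`.
-/

open MvPolynomial

noncomputable section

namespace Stmt2

variable (k : Type) [Field k] (d n : ℕ)

/-- `B = R ⊗_k T = k[x_1,…,x_d,y_1,…,y_n]`. -/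
abbrev B := MvPolynomial (Fin d ⊕ Fin n) k

/-- `T = k[y_1,…,y_n]`. -/
abbrev T := MvPolynomial (Fin n) k

/-- `B` is a `T`-algebra via `y_j ↦ y_j`. -/
instance : Algebra (T k n) (B k d n) :=
  ((rename Sum.inr : T k n →ₐ[k] B k d n).toRingHom).toAlgebra

/-- The bigrading weight: `bideg x_i = (1,0)`, `bideg y_j = (0,1)`. -/
def bwt : (Fin d ⊕ Fin n) → ℕ × ℕ := Sum.elim (fun _ => (1, 0)) (fun _ => (0, 1))

/-- The `x`-degree weight. -/
def wx : (Fin d ⊕ Fin n) → ℕ := Sum.elim (fun _ => 1) (fun _ => 0)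

/-- The ideal `m = (x_1,…,x_d)B`. -/
def mxB : Ideal (B k d n) := Ideal.span (Set.range fun i : Fin d => (X (Sum.inl i) : B k d n))

variable (I : Ideal (B k d n))

/-- `A = H⁰_m(S)`: elements of `S = B/I` annihilated by a power of `m`. -/
def H0 : Submodule (B k d n) (B k d n ⧸ I) :=
  ⨆ N : ℕ, Submodule.torsionBySet (B k d n) (B k d n ⧸ I)
    ((mxB k d n ^ N : Ideal (B k d n)) : Set (B k d n))

/-- The bigraded component of `S = B/I` in bidegree `p`. -/
def Scomp (p : ℕ × ℕ) : Submodule k (B k d n ⧸ I) :=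
  (weightedHomogeneousSubmodule k (bwt d n) p).map (Ideal.Quotient.mkₐ k I).toLinearMap

/-- The graded strand `S_j = ⊕_b S_{(j,b)}` of `S` in `x`-degree `j`, as a `T`-module. -/
def SxDeg (j : ℕ) : Submodule (T k n) (B k d n ⧸ I) :=
  Submodule.span (T k n) ((Ideal.Quotient.mk I) '' {g : B k d n | g.IsWeightedHomogeneous (wx d n) j})

/-- The graded strand of `S` in (possibly negative) `x`-degree `i : ℤ`. -/
def SxDegZ (i : ℤ) : Submodule (T k n) (B k d n ⧸ I) :=
  if 0 ≤ i then SxDeg k d n I i.toNat else ⊥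

/-- The graded strand `A_i = ⊕_b A_{(i,b)}` of `A = H⁰_m(S)`, as a `T`-module. -/
def AcompZ (i : ℤ) : Submodule (T k n) (B k d n ⧸ I) :=
  (H0 k d n I).restrictScalars (T k n) ⊓ SxDegZ k d n I i

/-- The graded component of `T` in (possibly negative) degree `j`. -/
def TcompZ (j : ℤ) : Submodule k (T k n) :=
  if 0 ≤ j then homogeneousSubmodule (Fin n) k j.toNat else ⊥

/-! ### Koszul complexes -/

section Koszul

variable {A : Type} [CommRing A]

/-- The Koszul module of a sequence of length `r`. -/
abbrev KM (A : Type) (r : ℕ) := (Fin r → Bool) → A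

/-- The part without the last generator. -/
def kz {r : ℕ} : KM A (r + 1) →ₗ[A] KM A r :=
  LinearMap.funLeft A A (fun t : Fin r → Bool => (Fin.cons false t : Fin (r + 1) → Bool))

/-- The part with the last generator. -/
def ko {r : ℕ} : KM A (r + 1) →ₗ[A] KM A r :=
  LinearMap.funLeft A A (fun t : Fin r → Bool => (Fin.cons true t : Fin (r + 1) → Bool))

lemma kz_apply {r : ℕ} (y : KM A (r + 1)) (t : Fin r → Bool) :
    kz y t = y (Fin.cons false t : Fin (r + 1) → Bool) := rfl

lemma ko_apply {r : ℕ} (y : KM A (r + 1)) (t : Fin r → Bool) :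
    ko y t = y (Fin.cons true t : Fin (r + 1) → Bool) := rfl

/-- Pairing. -/
def kp {r : ℕ} (a b : KM A r) : KM A (r + 1) :=
  fun s => if s 0 then b (Fin.tail s) else a (Fin.tail s)

@[simp] lemma kz_kp {r : ℕ} (a b : KM A r) : kz (kp a b) = a := by
  funext t; simp [kz_apply, kp]

@[simp] lemma ko_kp {r : ℕ} (a b : KM A r) : ko (kp a b) = b := by
  funext t; simp [ko_apply, kp]

lemma bcases {r : ℕ} (P : (Fin (r + 1) → Bool) → Prop)
    (h0 : ∀ t : Fin r → Bool, P (Fin.cons false t)) (h1 : ∀ t : Fin r → Bool, P (Fin.cons true t)) :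
    ∀ s, P s := by
  intro s
  rw [← Fin.cons_self_tail s]
  cases s 0
  · exact h0 _
  · exact h1 _

lemma km_ext {r : ℕ} {y y' : KM A (r + 1)} (h0 : kz y = kz y') (h1 : ko y = ko y') : y = y' := by
  funext s
  revert s
  apply bcases
  · intro t; exact congrFun h0 t
  · intro t; exact congrFun h1 t

/-- The Koszul differential. -/
def kd (f : ℕ → A) : (r : ℕ) → KM A r →ₗ[A] KM A r
  | 0 => 0
  | r + 1 =>
    { toFun := fun y => kp (kd f r (kz y) + f r • ko y) (-(kd f r (ko y)))
      map_add' := by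
        intro y y'
        apply km_ext
        · simp only [map_add, kz_kp, smul_add]; abel
        · simp only [map_add, ko_kp]; abel
      map_smul' := by
        intro c y
        apply km_ext
        · simp only [map_smul, kz_kp, smul_add, RingHom.id_apply, smul_comm c]
        · simp only [map_smul, ko_kp, RingHom.id_apply, smul_neg] }

@[simp] lemma kz_kd (f : ℕ → A) (r : ℕ) (y : KM A (r + 1)) :
    kz (kd f (r + 1) y) = kd f r (kz y) + f r • ko y := by
  simp [kd]

@[simp] lemma ko_kd (f : ℕ → A) (r : ℕ) (y : KM A (r + 1)) :
    ko (kd f (r + 1) y) = -kd f r (ko y) := by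
  simp [kd]

lemma kd_kd (f : ℕ → A) : ∀ (r : ℕ) (y : KM A r), kd f r (kd f r y) = 0
  | 0, y => rfl
  | r + 1, y => by
    apply km_ext
    · simp [kd_kd f r]
    · simp [kd_kd f r]

/-- The ideal of the first `r` elements. -/
def Is (f : ℕ → A) : ℕ → Ideal A
  | 0 => ⊥
  | r + 1 => Is f r ⊔ Ideal.span {f r}

lemma mem_Is_succ (f : ℕ → A) (r : ℕ) (g : A) :
    g ∈ Is f (r + 1) ↔ ∃ b, g - f r * b ∈ Is f r := by
  rw [Is, Submodule.mem_sup]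
  constructor
  · rintro ⟨a, ha, c, hc, rfl⟩
    obtain ⟨b, rfl⟩ := Ideal.mem_span_singleton'.1 hc
    exact ⟨b, by convert ha using 1; ring⟩
  · rintro ⟨b, hb⟩
    exact ⟨_, hb, f r * b, Ideal.mem_span_singleton'.2 ⟨b, by ring⟩, by ring⟩

lemma Is_le_succ (f : ℕ → A) (r : ℕ) : Is f r ≤ Is f (r + 1) := le_sup_left

/-- Augmentation: coefficient of the empty set. -/
def kaug {r : ℕ} (y : KM A r) : A := y (fun _ => false)

/-- Top coefficient. -/
def ktop {r : ℕ} (y : KM A r) : A := y (fun _ => true)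

lemma cons_const (r : ℕ) (b : Bool) :
    (Fin.cons b (fun _ : Fin r => b) : Fin (r + 1) → Bool) = fun _ => b := by
  funext i
  refine Fin.cases ?_ ?_ i <;> simp

lemma kaug_kz {r : ℕ} (y : KM A (r + 1)) : kaug (kz y) = kaug y := by
  simp [kaug, kz_apply, cons_const]

lemma kaug_kd (f : ℕ → A) : ∀ (r : ℕ) (y : KM A r), kaug (kd f r y) ∈ Is f r
  | 0, y => by simp [kd, kaug]
  | r + 1, y => by
    rw [← kaug_kz, kz_kd, mem_Is_succ]
    refine ⟨kaug (ko y), ?_⟩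
    have := kaug_kd f r (kz y)
    simpa [kaug] using this

/-- Inclusion in degree zero. -/
def kinc (r : ℕ) (a : A) : KM A r := fun s => if s = fun _ => false then a else 0

@[simp] lemma kaug_kinc (r : ℕ) (a : A) : kaug (kinc r a) = a := by simp [kaug, kinc]

lemma kd_kinc (f : ℕ → A) : ∀ (r : ℕ) (a : A), kd f r (kinc r a) = 0
  | 0, a => rfl
  | r + 1, a => by
    have h0 : kz (kinc (r + 1) a) = kinc r a := by
      funext t
      have : ((Fin.cons false t : Fin (r + 1) → Bool) = fun _ => false) ↔ t = fun _ => false := by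
        rw [← cons_const, Fin.cons_inj]; simp
      simp [kz_apply, kinc, this]
    have h1 : ko (kinc (r + 1) a) = 0 := by
      funext t
      have : ¬ ((Fin.cons true t : Fin (r + 1) → Bool) = fun _ => false) := by
        intro h; simpa using congrFun h 0
      simp [ko_apply, kinc, this]
    apply km_ext
    · simp [h0, h1, kd_kinc f r]
    · simp [h1]

lemma kaug_add {r : ℕ} (y y' : KM A r) : kaug (y + y') = kaug y + kaug y' := rfl
lemma kaug_sub {r : ℕ} (y y' : KM A r) : kaug (y - y') = kaug y - kaug y' := rfl
lemma kaug_neg {r : ℕ} (y : KM A r) : kaug (-y) = - kaug y := rfl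
lemma kaug_smul {r : ℕ} (c : A) (y : KM A r) : kaug (c • y) = c * kaug y := rfl

/-- Weakly regular sequences, concretely. -/
def WReg (f : ℕ → A) (d : ℕ) : Prop := ∀ r < d, ∀ a, f r * a ∈ Is f r → a ∈ Is f r

/-- Exactness of the Koszul complex of a regular sequence. -/
lemma koszul_exact (f : ℕ → A) : ∀ (r : ℕ), WReg f r → ∀ (y : KM A r), kd f r y = 0 →
    kaug y ∈ Is f r → ∃ v, kd f r v = y
  | 0, _, y, _, hy => by
    refine ⟨0, ?_⟩
    funext s
    have : s = fun _ => false := Subsingleton.elim _ _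
    subst this
    have h2 : kaug y = 0 := hy
    simpa [kaug] using h2.symm
  | r + 1, hf, y, hd, hy => by
    have hf' : WReg f r := fun s hs => hf s (by omega)
    have e0 : kd f r (kz y) + f r • ko y = 0 := by rw [← kz_kd, hd, map_zero]
    have e1 : kd f r (ko y) = 0 := by
      have : ko (kd f (r + 1) y) = 0 := by rw [hd, map_zero]
      simpa using this
    have a1 : kaug (ko y) ∈ Is f r := by
      apply hf r (by omega)
      have := kaug_kd f r (kz y)
      rw [eq_neg_of_add_eq_zero_left e0, kaug_neg, kaug_smul] at this
      simpa using this
    obtain ⟨v1, hv1⟩ := koszul_exact f r hf' (ko y) e1 a1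
    rw [← kaug_kz, mem_Is_succ] at hy
    obtain ⟨b, hb⟩ := hy
    set w1 : KM A r := -v1 + kinc r (b + kaug v1) with hw1
    have dw1 : kd f r w1 = - ko y := by simp [hw1, kd_kinc, hv1]
    have aw1 : kaug w1 = b := by rw [hw1, kaug_add, kaug_neg, kaug_kinc]; ring
    obtain ⟨v0, hv0⟩ := koszul_exact f r hf' (kz y - f r • w1) (by
      rw [map_sub, map_smul, dw1, smul_neg, sub_neg_eq_add, e0]) (by
      rw [kaug_sub, kaug_smul, aw1]; exact hb)
    refine ⟨kp v0 w1, ?_⟩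
    apply km_ext
    · simp [hv0]
    · simp [dw1]

/-- Homological degree. -/
def kw : (r : ℕ) → (Fin r → Bool) → ℕ
  | 0, _ => 0
  | r + 1, s => (if s 0 then 1 else 0) + kw r (Fin.tail s)

@[simp] lemma kw_cons (r : ℕ) (b : Bool) (t : Fin r → Bool) :
    kw (r + 1) (Fin.cons b t : Fin (r + 1) → Bool) = (if b then 1 else 0) + kw r t := by
  simp [kw]

lemma kw_le : ∀ (r : ℕ) (s : Fin r → Bool), kw r s ≤ r
  | 0, _ => le_rfl
  | r + 1, s => by
    have := kw_le r (Fin.tail s)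
    simp only [kw]
    split_ifs <;> omega

lemma kw_eq : ∀ (r : ℕ) (s : Fin r → Bool), kw r s = r → s = fun _ => true
  | 0, _, _ => Subsingleton.elim _ _
  | r + 1, s, h => by
    revert h
    revert s
    apply bcases
    · intro t h
      have := kw_le r t
      simp at h
      omega
    · intro t h
      simp at h
      rw [kw_eq r t (by omega), cons_const]

lemma kw_pos : ∀ (r : ℕ) (s : Fin r → Bool), kw r s = 0 → s = fun _ => false
  | 0, _, _ => Subsingleton.elim _ _
  | r + 1, s, h => by
    revert h
    revert s
    apply bcases
    · intro t h
      simp at h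
      rw [kw_pos r t h, cons_const]
    · intro t h
      simp at h

/-- Truncation. -/
def ktr (r p : ℕ) : KM A r →ₗ[A] KM A r where
  toFun y := fun s => if p ≤ kw r s then y s else 0
  map_add' y y' := by funext s; simp only [Pi.add_apply]; split_ifs <;> simp
  map_smul' c y := by funext s; simp only [Pi.smul_apply, RingHom.id_apply]; split_ifs <;> simp

lemma ktr_apply (r p : ℕ) (y : KM A r) (s) : ktr r p y s = if p ≤ kw r s then y s else 0 := rfl

lemma kz_ktr (r p : ℕ) (y : KM A (r + 1)) : kz (ktr (r + 1) p y) = ktr r p (kz y) := by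
  funext t; simp [kz_apply, ktr_apply]

lemma ko_ktr (r p : ℕ) (y : KM A (r + 1)) : ko (ktr (r + 1) (p + 1) y) = ktr r p (ko y) := by
  funext t; simp [ko_apply, ktr_apply, add_comm 1]

lemma ktr_zero (r : ℕ) (y : KM A r) : ktr r 0 y = y := by
  funext t; simp [ktr_apply]

lemma kd_ktr (f : ℕ → A) : ∀ (r p : ℕ) (y : KM A r),
    kd f r (ktr r (p + 1) y) = ktr r p (kd f r y)
  | 0, p, y => by simp [kd]
  | r + 1, p, y => by
    apply km_ext
    · rw [kz_kd, kz_ktr, ko_ktr, kz_ktr, kz_kd, kd_ktr f r, map_add, map_smul]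
    · cases p with
      | zero => rw [ko_kd, ko_ktr, ktr_zero, ktr_zero, ko_kd]
      | succ p => rw [ko_kd, ko_ktr, ko_ktr, ko_kd, kd_ktr f r, map_neg]

/-- Pointwise membership in an ideal. -/
def KJ (J : Ideal A) (r : ℕ) : Submodule A (KM A r) where
  carrier := {y | ∀ s, y s ∈ J}
  add_mem' h h' s := J.add_mem (h s) (h' s)
  zero_mem' _ := J.zero_mem
  smul_mem' c _ h s := J.mul_mem_left c (h s)

lemma mem_KJ {J : Ideal A} {r : ℕ} {y : KM A r} : y ∈ KJ J r ↔ ∀ s, y s ∈ J := Iff.rfl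

lemma kd_KJ (f : ℕ → A) (J : Ideal A) : ∀ (r : ℕ) (y : KM A r), y ∈ KJ J r → kd f r y ∈ KJ J r
  | 0, y, _ => by simp [kd]
  | r + 1, y, h => by
    have h0 : kz y ∈ KJ J r := fun t => h _
    have h1 : ko y ∈ KJ J r := fun t => h _
    apply bcases
    · intro t
      rw [← kz_apply (kd f (r + 1) y) t, kz_kd]
      exact (KJ J r).add_mem (kd_KJ f J r _ h0) ((KJ J r).smul_mem _ h1) t
    · intro t
      rw [← ko_apply (kd f (r + 1) y) t, ko_kd]
      exact (KJ J r).neg_mem (kd_KJ f J r _ h1) t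

lemma ktr_KJ (J : Ideal A) (r p : ℕ) (y : KM A r) (h : y ∈ KJ J r) : ktr r p y ∈ KJ J r := by
  intro s
  rw [ktr_apply]
  split_ifs
  · exact h s
  · exact J.zero_mem

/-- Elements of homological degree at least `p`. -/
def Ge (r p : ℕ) : Submodule A (KM A r) where
  carrier := {y | ktr r p y = y}
  add_mem' {y y'} h h' := by
    simp only [Set.mem_ofPred_eq, map_add] at *; rw [h, h']
  zero_mem' := by simp
  smul_mem' c y h := by simp only [Set.mem_ofPred_eq, map_smul] at *; rw [h]

lemma mem_Ge {r p : ℕ} {y : KM A r} : y ∈ Ge r p ↔ ktr r p y = y := Iff.rfl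

lemma ktr_mem_Ge (r p : ℕ) (y : KM A r) : ktr r p y ∈ Ge r p := by
  rw [mem_Ge]; funext s; simp only [ktr_apply]; split_ifs <;> rfl

lemma Ge_mono {r p q : ℕ} (h : p ≤ q) {y : KM A r} (hy : y ∈ Ge r q) : y ∈ Ge r p := by
  rw [mem_Ge] at *; rw [← hy]; funext s; simp only [ktr_apply]; split_ifs <;> first | rfl | omega

variable (f x : ℕ → A) (d : ℕ)

lemma KJ_succ (r : ℕ) (y : KM A d) (h : y ∈ KJ (Is x (r + 1)) d) :
    ∃ v, y - x r • v ∈ KJ (Is x r) d := by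
  have : ∀ s, ∃ b, y s - x r * b ∈ Is x r := fun s => (mem_Is_succ x r _).1 (h s)
  choose v hv using this
  exact ⟨v, hv⟩

lemma KJ_reg (hx : WReg x d) (r : ℕ) (hr : r < d) (y : KM A d) (h : x r • y ∈ KJ (Is x r) d) :
    y ∈ KJ (Is x r) d := fun s => hx r hr _ (h s)

lemma KJ_mono (r : ℕ) {y : KM A d} (h : y ∈ KJ (Is x r) d) : y ∈ KJ (Is x (r + 1)) d :=
  fun s => Is_le_succ x r (h s)

lemma KJ_x (r : ℕ) (y : KM A d) : x r • y ∈ KJ (Is x (r + 1)) d := by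
  intro s
  rw [mem_Is_succ]
  exact ⟨y s, by simp⟩

/-- Vanishing of the homology of the Koszul complex modulo a regular sequence. -/
lemma kvanish (hf : WReg f d) (hx : WReg x d) : ∀ r, r ≤ d → ∀ p, r < p → ∀ y : KM A d,
    y ∈ Ge d p → kd f d y ∈ KJ (Is x r) d →
    ∃ v ∈ Ge d (p + 1), y - kd f d v ∈ KJ (Is x r) d := by
  intro r
  induction r with
  | zero =>
    intro _ p hp y hy hd
    have hd0 : kd f d y = 0 := funext fun s => hd s
    have ha : kaug y = 0 := by
      rw [← mem_Ge.1 hy, kaug, ktr_apply, if_neg]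
      have : kw d (fun _ => false) = 0 := by
        clear * -
        induction d with
        | zero => rfl
        | succ d ih => rw [← cons_const, kw_cons, ih]; simp
      omega
    obtain ⟨v, hv⟩ := koszul_exact f d hf y hd0 (by rw [ha]; exact Ideal.zero_mem _)
    refine ⟨ktr d (p + 1) v, ktr_mem_Ge _ _ _, ?_⟩
    rw [kd_ktr, hv, mem_Ge.1 hy, sub_self]
    exact Submodule.zero_mem _
  | succ r ih =>
    intro hr p hp y hy hd
    obtain ⟨p, rfl⟩ : ∃ q, p = q + 1 := ⟨p - 1, by omega⟩
    obtain ⟨v0, hv0⟩ := KJ_succ x d r _ hd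
    -- truncate
    set v := ktr d p v0 with hv
    have hvm : kd f d y - x r • v ∈ KJ (Is x r) d := by
      have := ktr_KJ _ d p _ hv0
      rwa [map_sub, ← kd_ktr, mem_Ge.1 hy, map_smul] at this
    have h1 : kd f d v ∈ KJ (Is x r) d := by
      apply KJ_reg x d hx r (by omega)
      have := kd_KJ f _ d _ hvm
      rw [map_sub, kd_kd, zero_sub, map_smul] at this
      simpa using (KJ (Is x r) d).neg_mem this
    obtain ⟨v', hv'g, hv'⟩ := ih (by omega) p (by omega) v (ktr_mem_Ge _ _ _) h1
    obtain ⟨y', hy'g, hy'⟩ := ih (by omega) (p + 1) (by omega) (y - x r • v')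
      (Submodule.sub_mem _ hy (Submodule.smul_mem _ _ hv'g)) (by
        have e : kd f d (y - x r • v') = (kd f d y - x r • v) + x r • (v - kd f d v') := by
          rw [map_sub, map_smul, smul_sub]; abel
        rw [e]
        exact Submodule.add_mem _ hvm (Submodule.smul_mem _ _ hv'))
    refine ⟨y', hy'g, ?_⟩
    have e : y - kd f d y' = (y - x r • v' - kd f d y') + x r • v' := by abel
    rw [e]
    exact Submodule.add_mem _ (KJ_mono x d r hy') (KJ_x x d r _)

/-- Zigzag chains. -/
def Chain : Submodule A (ℕ → KM A d) where
  carrier := {z | (∀ r, r ≤ d → z r ∈ Ge d r) ∧ kd f d (z 0) = 0 ∧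
    ∀ r, r < d → kd f d (z (r + 1)) - x r • z r ∈ KJ (Is x r) d}
  add_mem' {z z'} h h' := by
    refine ⟨fun r hr => Submodule.add_mem _ (h.1 r hr) (h'.1 r hr), ?_, ?_⟩
    · simp [h.2.1, h'.2.1]
    · intro r hr
      have := Submodule.add_mem _ (h.2.2 r hr) (h'.2.2 r hr)
      convert this using 1
      simp only [Pi.add_apply, map_add, smul_add]; abel
  zero_mem' := by
    refine ⟨fun r hr => Submodule.zero_mem _, by simp, fun r hr => by simp⟩
  smul_mem' c z h := by
    refine ⟨fun r hr => Submodule.smul_mem _ _ (h.1 r hr), ?_, ?_⟩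
    · simp [h.2.1]
    · intro r hr
      have := Submodule.smul_mem _ c (h.2.2 r hr)
      convert this using 1
      simp only [Pi.smul_apply, map_smul, smul_sub, smul_comm c]

variable {f x d}

lemma Chain.d_mem {z : ℕ → KM A d} (hz : z ∈ Chain f x d) : ∀ r, r ≤ d →
    kd f d (z r) ∈ KJ (Is x r) d
  | 0, _ => by rw [hz.2.1]; exact Submodule.zero_mem _
  | r + 1, hr => by
    have := Submodule.add_mem _ (KJ_mono x d r (hz.2.2 r hr)) (KJ_x x d r (z r))
    simpa using this

/-- Boundaries modulo `J_r`. -/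
def Bd (f x : ℕ → A) (d r : ℕ) (y : KM A d) : Prop := ∃ v, y - kd f d v ∈ KJ (Is x r) d

lemma Chain.step (hf : WReg f d) (hx : WReg x d) {z : ℕ → KM A d} (hz : z ∈ Chain f x d) (c : A)
    (r : ℕ) (hr : r < d) : Bd f x d r (c • z r) ↔ Bd f x d (r + 1) (c • z (r + 1)) := by
  constructor
  · rintro ⟨v0, hv0⟩
    set v := ktr d (r + 1) v0 with hvd
    have hv : c • z r - kd f d v ∈ KJ (Is x r) d := by
      have := ktr_KJ _ d r _ hv0
      rwa [map_sub, ← kd_ktr, map_smul, mem_Ge.1 (hz.1 r hr.le)] at this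
    obtain ⟨w, -, hw⟩ := kvanish f x d hf hx r hr.le (r + 1) (by omega) (c • z (r + 1) - x r • v)
      (Submodule.sub_mem _ (Submodule.smul_mem _ _ (hz.1 (r + 1) hr))
        (Submodule.smul_mem _ _ (ktr_mem_Ge _ _ _))) (by
        have e : kd f d (c • z (r + 1) - x r • v) =
            c • (kd f d (z (r + 1)) - x r • z r) + x r • (c • z r - kd f d v) := by
          rw [map_sub, map_smul, map_smul, smul_sub, smul_sub, smul_comm c]; abel
        rw [e]
        exact Submodule.add_mem _ (Submodule.smul_mem _ _ (hz.2.2 r hr)) (Submodule.smul_mem _ _ hv))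
    refine ⟨w, ?_⟩
    have e : c • z (r + 1) - kd f d w = (c • z (r + 1) - x r • v - kd f d w) + x r • v := by abel
    rw [e]
    exact Submodule.add_mem _ (KJ_mono x d r hw) (KJ_x x d r _)
  · rintro ⟨v, hv⟩
    obtain ⟨v', hv'⟩ := KJ_succ x d r _ hv
    refine ⟨v', ?_⟩
    apply KJ_reg x d hx r hr
    have h1 := kd_KJ f _ d _ hv'
    rw [map_sub, map_sub, kd_kd, sub_zero, map_smul, map_smul] at h1
    have h2 := Submodule.smul_mem _ c (hz.2.2 r hr)
    have := Submodule.sub_mem _ h1 h2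
    convert this using 1
    rw [smul_sub, smul_sub, smul_comm c]; abel

lemma Chain.key (hf : WReg f d) (hx : WReg x d) {z : ℕ → KM A d} (hz : z ∈ Chain f x d) (c : A) :
    c * kaug (z 0) ∈ Is f d ↔ c * ktop (z d) ∈ Is x d := by
  have h : ∀ r, r ≤ d → (Bd f x d 0 (c • z 0) ↔ Bd f x d r (c • z r)) := by
    intro r
    induction r with
    | zero => intro _; exact Iff.rfl
    | succ r ih => intro hr; rw [ih (by omega), Chain.step hf hx hz c r hr]
  have h0 : c * kaug (z 0) ∈ Is f d ↔ Bd f x d 0 (c • z 0) := by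
    rw [← kaug_smul]
    constructor
    · intro hc
      obtain ⟨v, hv⟩ := koszul_exact f d hf (c • z 0) (by rw [map_smul, hz.2.1, smul_zero]) hc
      exact ⟨v, by rw [hv, sub_self]; exact Submodule.zero_mem _⟩
    · rintro ⟨v, hv⟩
      have : c • z 0 - kd f d v = 0 := funext fun s => hv s
      rw [sub_eq_zero.1 this]
      exact kaug_kd f d v
  rw [h0, h d le_rfl]
  constructor
  · rintro ⟨v, hv⟩
    have := ktr_KJ _ d d _ hv
    rw [map_sub, ← kd_ktr, map_smul, mem_Ge.1 (hz.1 d le_rfl)] at this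
    have e : ktr d (d + 1) v = 0 := by
      funext s
      rw [ktr_apply, if_neg (by have := kw_le d s; omega)]; rfl
    rw [e, map_zero, sub_zero] at this
    exact this _
  · intro hc
    refine ⟨0, ?_⟩
    rw [map_zero, sub_zero]
    intro s
    by_cases hs : kw d s = d
    · rw [kw_eq d s hs]; exact hc
    · have : z d s = 0 := by
        rw [← mem_Ge.1 (hz.1 d le_rfl), ktr_apply, if_neg (by have := kw_le d s; omega)]
      rw [Pi.smul_apply, this, smul_zero]
      exact Ideal.zero_mem _

lemma Is_x_mem (x : ℕ → A) (d : ℕ) (s : ℕ) (hs : s < d) : x s ∈ Is x d := by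
  induction d with
  | zero => omega
  | succ d ih =>
    by_cases h : s = d
    · subst h; rw [mem_Is_succ]; exact ⟨1, by simp⟩
    · exact Is_le_succ _ _ (ih (by omega))

lemma Chain.exists_of_u (hf : WReg f d) (hx : WReg x d) (u : A)
    (hu : ∀ s < d, x s * u ∈ Is f d) : ∃ z ∈ Chain f x d, kaug (z 0) = u := by
  have main : ∀ r, r ≤ d → ∃ z : ℕ → KM A d, kaug (z 0) = u ∧ kd f d (z 0) = 0 ∧
      (∀ q ≤ r, z q ∈ Ge d q) ∧
      (∀ q < r, kd f d (z (q + 1)) - x q • z q ∈ KJ (Is x q) d) ∧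
      kd f d (z r) ∈ KJ (Is x r) d ∧
      ∀ s < d, Bd f x d r (x s • z r) := by
    intro r
    induction r with
    | zero =>
      intro _
      refine ⟨fun _ => kinc d u, by simp, kd_kinc _ _ _, ?_, by simp, ?_, ?_⟩
      · intro q hq
        obtain rfl : q = 0 := by omega
        exact ktr_zero _ _
      · simp [kd_kinc]
      · intro s hs
        obtain ⟨v, hv⟩ := koszul_exact f d hf (x s • kinc d u)
          (by rw [map_smul, kd_kinc, smul_zero]) (by rw [kaug_smul, kaug_kinc]; exact hu s hs)
        exact ⟨v, by rw [hv, sub_self]; exact Submodule.zero_mem _⟩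
    | succ r ih =>
      intro hr
      obtain ⟨z, hzu, hz0, hzg, hzc, hzd, hzx⟩ := ih (by omega)
      obtain ⟨y0, hy0⟩ := hzx r (by omega)
      set y := ktr d (r + 1) y0 with hyd
      have hy : x r • z r - kd f d y ∈ KJ (Is x r) d := by
        have := ktr_KJ _ d r _ hy0
        rwa [map_sub, ← kd_ktr, map_smul, mem_Ge.1 (hzg r le_rfl)] at this
      have hy' : kd f d y - x r • z r ∈ KJ (Is x r) d := by
        have := Submodule.neg_mem _ hy
        rwa [neg_sub] at this
      have ne : ∀ q, q ≤ r → Function.update z (r + 1) y q = z q := by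
        intro q hq
        rw [Function.update_of_ne (by omega)]
      refine ⟨Function.update z (r + 1) y, ?_, ?_, ?_, ?_, ?_, ?_⟩
      · rw [ne 0 (by omega)]; exact hzu
      · rw [ne 0 (by omega)]; exact hz0
      · intro q hq
        by_cases h : q = r + 1
        · subst h; rw [Function.update_self]; exact ktr_mem_Ge _ _ _
        · rw [ne q (by omega)]; exact hzg q (by omega)
      · intro q hq
        by_cases h : q = r
        · subst h; rw [Function.update_self, ne q le_rfl]; exact hy'
        · rw [ne q (by omega), ne (q + 1) (by omega)]; exact hzc q (by omega)
      · rw [Function.update_self]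
        have := Submodule.add_mem _ (KJ_mono x d r hy') (KJ_x x d r (z r))
        simpa using this
      · intro s hs
        rw [Function.update_self]
        obtain ⟨v0, hv0⟩ := hzx s hs
        set v := ktr d (r + 1) v0 with hvd
        have hv : x s • z r - kd f d v ∈ KJ (Is x r) d := by
          have := ktr_KJ _ d r _ hv0
          rwa [map_sub, ← kd_ktr, map_smul, mem_Ge.1 (hzg r le_rfl)] at this
        obtain ⟨w, -, hw⟩ := kvanish f x d hf hx r (by omega) (r + 1) (by omega)
          (x s • y - x r • v)
          (Submodule.sub_mem _ (Submodule.smul_mem _ _ (ktr_mem_Ge _ _ _))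
            (Submodule.smul_mem _ _ (ktr_mem_Ge _ _ _))) (by
            have e : kd f d (x s • y - x r • v) =
                x s • (kd f d y - x r • z r) + x r • (x s • z r - kd f d v) := by
              rw [map_sub, map_smul, map_smul, smul_sub, smul_sub, smul_comm (x s)]; abel
            rw [e]
            exact Submodule.add_mem _ (Submodule.smul_mem _ _ hy') (Submodule.smul_mem _ _ hv))
        refine ⟨w, ?_⟩
        have e : x s • y - kd f d w = (x s • y - x r • v - kd f d w) + x r • v := by abel
        rw [e]
        exact Submodule.add_mem _ (KJ_mono x d r hw) (KJ_x x d r _)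
  obtain ⟨z, h1, h2, h3, h4, -, -⟩ := main d le_rfl
  exact ⟨z, ⟨h3, h2, h4⟩, h1⟩

/-- The element with prescribed top coefficient. -/
def ktinc (d : ℕ) (w : A) : KM A d := fun s => if s = fun _ => true then w else 0

lemma kw_true (d : ℕ) : kw d (fun _ => true) = d := by
  induction d with
  | zero => rfl
  | succ d ih => rw [← cons_const, kw_cons, ih]; simp [add_comm]

lemma ktinc_ge (d : ℕ) (w : A) : ktinc d w ∈ Ge d d := by
  rw [mem_Ge]
  funext s
  rw [ktr_apply]
  split_ifs with h
  · rfl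
  · rw [ktinc, if_neg]
    rintro rfl
    rw [kw_true] at h
    exact h le_rfl

lemma kd_mem_of_fw (J : Ideal A) : ∀ (d : ℕ) (y : KM A d),
    (∀ r < d, ∀ s, f r * y s ∈ J) → kd f d y ∈ KJ J d
  | 0, y, _ => by simp [kd]
  | d + 1, y, h => by
    have h0 := kd_mem_of_fw J d (kz y) (fun r hr s => h r (by omega) _)
    have h1 := kd_mem_of_fw J d (ko y) (fun r hr s => h r (by omega) _)
    apply bcases
    · intro t
      rw [← kz_apply (kd f (d + 1) y) t, kz_kd]
      exact J.add_mem (h0 t) (h d (by omega) _)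
    · intro t
      rw [← ko_apply (kd f (d + 1) y) t, ko_kd]
      exact J.neg_mem (h1 t)

lemma Chain.exists_of_w (hx : WReg x d) (w : A)
    (hw : ∀ s < d, f s * w ∈ Is x d) : ∃ z ∈ Chain f x d, ktop (z d) = w := by
  have main : ∀ m, m ≤ d → ∃ z : ℕ → KM A d, ktop (z d) = w ∧
      (∀ q, d - m ≤ q → q ≤ d → z q ∈ Ge d q) ∧
      (∀ q, d - m ≤ q → q < d → kd f d (z (q + 1)) - x q • z q ∈ KJ (Is x q) d) ∧
      kd f d (z (d - m)) ∈ KJ (Is x (d - m)) d := by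
    intro m
    induction m with
    | zero =>
      intro _
      refine ⟨fun _ => ktinc d w, by simp [ktop, ktinc], ?_, by intros; omega, ?_⟩
      · intro q h1 h2
        obtain rfl : q = d := by omega
        exact ktinc_ge _ _
      · apply kd_mem_of_fw
        intro r hr s
        simp only [ktinc]
        split_ifs
        · exact hw r hr
        · simp
    | succ m ih =>
      intro hm
      obtain ⟨z, hzw, hzg, hzc, hzd⟩ := ih (by omega)
      obtain ⟨r, hr⟩ : ∃ r, r = d - (m + 1) := ⟨_, rfl⟩
      have hr1 : d - m = r + 1 := by omega
      rw [← hr]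
      rw [hr1] at hzd hzg hzc
      obtain ⟨y0, hy0⟩ := KJ_succ x d r _ hzd
      set y := ktr d r y0 with hyd
      have hy : kd f d (z (r + 1)) - x r • y ∈ KJ (Is x r) d := by
        have := ktr_KJ _ d r _ hy0
        rwa [map_sub, ← kd_ktr, map_smul, mem_Ge.1 (hzg (r + 1) le_rfl (by omega))] at this
      have ne : ∀ q, r + 1 ≤ q → Function.update z r y q = z q := by
        intro q hq
        rw [Function.update_of_ne (by omega)]
      refine ⟨Function.update z r y, ?_, ?_, ?_, ?_⟩
      · rw [ne d (by omega)]; exact hzw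
      · intro q h1 h2
        by_cases h : q = r
        · subst h; rw [Function.update_self]; exact ktr_mem_Ge _ _ _
        · rw [ne q (by omega)]; exact hzg q (by omega) h2
      · intro q h1 h2
        rw [ne (q + 1) (by omega)]
        by_cases h : q = r
        · subst h; rw [Function.update_self]; exact hy
        · rw [ne q (by omega)]; exact hzc q (by omega) h2
      · rw [Function.update_self]
        apply KJ_reg x d hx r (by omega)
        have := kd_KJ f _ d _ hy
        rw [map_sub, kd_kd, zero_sub, map_smul] at this
        simpa using (KJ (Is x r) d).neg_mem this
  obtain ⟨z, h1, h2, h3, h4⟩ := main d le_rfl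
  rw [Nat.sub_self] at h2 h3 h4
  exact ⟨z, ⟨fun r hr => h2 r (by omega) hr, funext fun s => h4 s,
    fun r hr => h3 r (by omega) hr⟩, h1⟩

/-- The duality relation. -/
def ZR (f x : ℕ → A) (d : ℕ) : Submodule A (A × A) where
  carrier := {p | ∃ z ∈ Chain f x d, kaug (z 0) = p.1 ∧ ktop (z d) = p.2}
  add_mem' := by
    rintro p q ⟨z, hz, h1, h2⟩ ⟨z', hz', h1', h2'⟩
    exact ⟨z + z', Submodule.add_mem _ hz hz', by rw [Prod.fst_add, ← h1, ← h1']; rfl,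
      by rw [Prod.snd_add, ← h2, ← h2']; rfl⟩
  zero_mem' := ⟨0, Submodule.zero_mem _, rfl, rfl⟩
  smul_mem' := by
    rintro c p ⟨z, hz, h1, h2⟩
    exact ⟨c • z, Submodule.smul_mem _ _ hz, by rw [Prod.smul_fst, ← h1]; rfl,
      by rw [Prod.smul_snd, ← h2]; rfl⟩

end Koszul
/-! ### Graded projections -/

section Graded

variable {σ F G : Type} [Field F] [AddCommGroup G] (ω : σ → G)

lemma whc_mul {g : MvPolynomial σ F} {γ : G} (hg : g.IsWeightedHomogeneous ω γ) (P : G)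
    (h : MvPolynomial σ F) :
    weightedHomogeneousComponent ω P (g * h) = g * weightedHomogeneousComponent ω (P - γ) h := by
  classical
  ext m
  rw [coeff_weightedHomogeneousComponent, coeff_mul, coeff_mul]
  have : ∀ p ∈ Finset.HasAntidiagonal.antidiagonal m,
      coeff p.1 g * coeff p.2 (weightedHomogeneousComponent ω (P - γ) h) =
      if Finsupp.weight ω m = P then coeff p.1 g * coeff p.2 h else 0 := by
    intro p hp
    rw [Finset.HasAntidiagonal.mem_antidiagonal] at hp
    rw [coeff_weightedHomogeneousComponent]
    by_cases h0 : coeff p.1 g = 0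
    · simp [h0]
    · have h1 := hg h0
      have : Finsupp.weight ω m = P ↔ Finsupp.weight ω p.2 = P - γ := by
        rw [← hp, map_add, h1, eq_sub_iff_add_eq, add_comm]
      simp only [this]
      split_ifs <;> simp
  rw [Finset.sum_congr rfl this]
  split_ifs <;> simp

/-- Partial sums of degrees. -/
def dsum (γ : ℕ → G) : ℕ → G
  | 0 => 0
  | r + 1 => dsum γ r + γ r

/-- Internal degree shift of a Koszul basis element. -/
def kg (γ : ℕ → G) : (r : ℕ) → (Fin r → Bool) → G
  | 0, _ => 0
  | r + 1, s => (if s 0 then γ r else 0) + kg γ r (Fin.tail s)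

@[simp] lemma kg_cons (γ : ℕ → G) (r : ℕ) (b : Bool) (t : Fin r → Bool) :
    kg γ (r + 1) (Fin.cons b t : Fin (r + 1) → Bool) = (if b then γ r else 0) + kg γ r t := by
  simp [kg]

lemma kg_true (γ : ℕ → G) (d : ℕ) : kg γ d (fun _ => true) = dsum γ d := by
  induction d with
  | zero => rfl
  | succ d ih => rw [← cons_const, kg_cons, ih]; simp [dsum, add_comm]

lemma kg_false (γ : ℕ → G) (d : ℕ) : kg γ d (fun _ => false) = 0 := by
  induction d with
  | zero => rfl
  | succ d ih => rw [← cons_const, kg_cons, ih]; simp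

/-- Projection of the Koszul complex to internal degree `P`. -/
def kpr (γ : ℕ → G) (r : ℕ) (P : G) (y : KM (MvPolynomial σ F) r) : KM (MvPolynomial σ F) r :=
  fun s => weightedHomogeneousComponent ω (P - kg γ r s) (y s)

lemma kz_kpr (γ : ℕ → G) (r : ℕ) (P : G) (y : KM (MvPolynomial σ F) (r + 1)) :
    kz (kpr ω γ (r + 1) P y) = kpr ω γ r P (kz y) := by
  funext t; simp [kz_apply, kpr]

lemma ko_kpr (γ : ℕ → G) (r : ℕ) (P : G) (y : KM (MvPolynomial σ F) (r + 1)) :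
    ko (kpr ω γ (r + 1) P y) = kpr ω γ r (P - γ r) (ko y) := by
  funext t; simp [ko_apply, kpr, sub_sub]

lemma kpr_add (γ : ℕ → G) (r : ℕ) (P : G) (y y' : KM (MvPolynomial σ F) r) :
    kpr ω γ r P (y + y') = kpr ω γ r P y + kpr ω γ r P y' := by
  funext t; simp [kpr]

lemma kpr_sub (γ : ℕ → G) (r : ℕ) (P : G) (y y' : KM (MvPolynomial σ F) r) :
    kpr ω γ r P (y - y') = kpr ω γ r P y - kpr ω γ r P y' := by
  funext t; simp [kpr]

lemma kpr_neg (γ : ℕ → G) (r : ℕ) (P : G) (y : KM (MvPolynomial σ F) r) :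
    kpr ω γ r P (-y) = - kpr ω γ r P y := by
  funext t; simp [kpr]

lemma kpr_zero (γ : ℕ → G) (r : ℕ) (P : G) :
    kpr ω γ r P (0 : KM (MvPolynomial σ F) r) = 0 := by
  funext t; simp [kpr]

lemma kpr_smul (γ : ℕ → G) (r : ℕ) (P : G) {g : MvPolynomial σ F} {ξ : G}
    (hg : g.IsWeightedHomogeneous ω ξ) (y : KM (MvPolynomial σ F) r) :
    kpr ω γ r P (g • y) = g • kpr ω γ r (P - ξ) y := by
  funext t
  simp only [kpr, Pi.smul_apply, smul_eq_mul, whc_mul ω hg]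
  rw [sub_right_comm]

lemma kpr_kd (f : ℕ → MvPolynomial σ F) (γ : ℕ → G) : ∀ (r : ℕ)
    (_ : ∀ s < r, (f s).IsWeightedHomogeneous ω (γ s)) (P : G) (y : KM (MvPolynomial σ F) r),
    kpr ω γ r P (kd f r y) = kd f r (kpr ω γ r P y)
  | 0, _, P, y => by simp [kd, kpr_zero]
  | r + 1, hf, P, y => by
    have hf' : ∀ s < r, (f s).IsWeightedHomogeneous ω (γ s) := fun s hs => hf s (by omega)
    apply km_ext
    · rw [kz_kpr, kz_kd, kz_kd, kpr_add, kpr_kd f γ r hf', kpr_smul ω γ r P (hf r (by omega)),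
        kz_kpr, ko_kpr]
    · rw [ko_kpr, ko_kd, ko_kd, kpr_neg, kpr_kd f γ r hf', ko_kpr]

lemma Is_whc (x : ℕ → MvPolynomial σ F) (ξ : ℕ → G) : ∀ (r : ℕ)
    (_ : ∀ s < r, (x s).IsWeightedHomogeneous ω (ξ s)) (P : G) (g : MvPolynomial σ F),
    g ∈ Is x r → weightedHomogeneousComponent ω P g ∈ Is x r
  | 0, _, P, g, hg => by
    have : g = 0 := hg
    rw [this, map_zero]; exact Ideal.zero_mem _
  | r + 1, hx, P, g, hg => by
    rw [mem_Is_succ] at *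
    obtain ⟨b, hb⟩ := hg
    refine ⟨weightedHomogeneousComponent ω (P - ξ r) b, ?_⟩
    rw [← whc_mul ω (hx r (by omega)), ← map_sub]
    exact Is_whc x ξ r (fun s hs => hx s (by omega)) P _ hb

lemma kpr_KJ (x : ℕ → MvPolynomial σ F) (γ ξ : ℕ → G) (d r : ℕ)
    (hx : ∀ s < r, (x s).IsWeightedHomogeneous ω (ξ s)) (P : G) (y : KM (MvPolynomial σ F) d)
    (h : y ∈ KJ (Is x r) d) : kpr ω γ d P y ∈ KJ (Is x r) d :=
  fun s => Is_whc ω x ξ r hx _ _ (h s)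

lemma kpr_Ge (γ : ℕ → G) (d p : ℕ) (P : G) (y : KM (MvPolynomial σ F) d)
    (h : y ∈ Ge d p) : kpr ω γ d P y ∈ Ge d p := by
  rw [mem_Ge] at *
  funext s
  rw [ktr_apply]
  split_ifs with hs
  · rfl
  · rw [kpr, ← h, ktr_apply, if_neg hs, map_zero]

lemma ZR_whc (f x : ℕ → MvPolynomial σ F) (γ ξ : ℕ → G) (d : ℕ)
    (hf : ∀ s < d, (f s).IsWeightedHomogeneous ω (γ s))
    (hx : ∀ s < d, (x s).IsWeightedHomogeneous ω (ξ s)) (P : G) (u w : MvPolynomial σ F)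
    (h : (u, w) ∈ ZR f x d) :
    (weightedHomogeneousComponent ω P u,
      weightedHomogeneousComponent ω (P + dsum ξ d - dsum γ d) w) ∈ ZR f x d := by
  obtain ⟨z, hz, hu, hw⟩ := h
  simp only at hu hw
  refine ⟨fun r => kpr ω γ d (P + dsum ξ r) (z r), ⟨?_, ?_, ?_⟩, ?_, ?_⟩
  · intro r hr
    exact kpr_Ge ω γ d r _ _ (hz.1 r hr)
  · rw [← kpr_kd ω f γ d hf, hz.2.1, kpr_zero]
  · intro r hr
    have := kpr_KJ ω x γ ξ d r (fun s hs => hx s (by omega)) (P + dsum ξ (r + 1)) _ (hz.2.2 r hr)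
    rw [kpr_sub, kpr_kd ω f γ d hf, kpr_smul ω γ d _ (hx r hr)] at this
    convert this using 4
    rw [dsum]; abel
  · rw [← hu]
    simp [kaug, kpr, kg_false, dsum]
  · rw [← hw]
    simp [ktop, kpr, kg_true]

end Graded
/-! ### Extending finite families, ideals -/

section Ext

/-- Extend a finite family by zero. -/
def ext0 {X : Type} [Zero X] {d : ℕ} (f : Fin d → X) : ℕ → X :=
  fun r => if h : r < d then f ⟨r, h⟩ else 0

lemma ext0_lt {X : Type} [Zero X] {d : ℕ} (f : Fin d → X) (r : ℕ) (h : r < d) :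
    ext0 f r = f ⟨r, h⟩ := by simp [ext0, h]

lemma dsum_ext0 {X : Type} [AddCommGroup X] {d : ℕ} (f : Fin d → X) :
    dsum (ext0 f) d = ∑ i, f i := by
  have : ∀ r, dsum (ext0 f) r = ∑ i ∈ Finset.range r, ext0 f i := by
    intro r
    induction r with
    | zero => rfl
    | succ r ih => rw [dsum, ih, Finset.sum_range_succ]
  rw [this, Finset.sum_range]
  exact Finset.sum_congr rfl fun i _ => ext0_lt f i i.2

variable {A : Type} [CommRing A]

lemma Is_eq_span (g : ℕ → A) (r : ℕ) : Is g r = Ideal.span (g '' Set.Iio r) := by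
  induction r with
  | zero => simp [Is]
  | succ r ih =>
    rw [Is, ih, ← Ideal.span_union]
    congr 1
    ext a
    simp only [Set.mem_union, Set.mem_image, Set.mem_Iio, Set.mem_singleton_iff]
    constructor
    · rintro (⟨s, hs, rfl⟩ | rfl)
      · exact ⟨s, by omega, rfl⟩
      · exact ⟨r, by omega, rfl⟩
    · rintro ⟨s, hs, rfl⟩
      by_cases h : s = r
      · right; rw [h]
      · left; exact ⟨s, by omega, rfl⟩

lemma Is_ext0 {d : ℕ} (f : Fin d → A) : Is (ext0 f) d = Ideal.span (Set.range f) := by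
  rw [Is_eq_span]
  congr 1
  ext a
  simp only [Set.mem_image, Set.mem_Iio, Set.mem_range]
  constructor
  · rintro ⟨s, hs, rfl⟩
    exact ⟨⟨s, hs⟩, (ext0_lt f s hs).symm⟩
  · rintro ⟨i, rfl⟩
    exact ⟨i, i.2, ext0_lt f i i.2⟩

lemma WReg_of_isRegular {d : ℕ} (f : Fin d → A)
    (h : RingTheory.Sequence.IsRegular A (List.ofFn f)) : WReg (ext0 f) d := by
  intro r hr a ha
  have h1 := h.regular_mod_prev r (by simpa using hr)
  have e : (Ideal.ofList ((List.ofFn f).take r) • ⊤ : Submodule A A) = Is (ext0 f) r := by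
    rw [Is_eq_span, smul_eq_mul, Ideal.mul_top, Ideal.ofList]
    congr 1
    ext b
    simp only [Set.mem_image, Set.mem_Iio, Set.mem_ofPred_eq, List.mem_take_iff_getElem]
    constructor
    · rintro ⟨i, hi, rfl⟩
      simp at hi
      exact ⟨i, hi.1, by simp [ext0, hi.2]⟩
    · rintro ⟨i, hi, rfl⟩
      refine ⟨i, by simp; omega, ?_⟩
      rw [ext0_lt _ _ (by omega)]; simp
  rw [e] at h1
  have h2 : (List.ofFn f)[r]'(by simpa using hr) = ext0 f r := by
    rw [ext0_lt _ _ hr]; simp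
  rw [h2] at h1
  have h3 := @h1 (Submodule.Quotient.mk a) 0 (by
    simp only [smul_zero]
    rw [← Submodule.Quotient.mk_smul, Submodule.Quotient.mk_eq_zero]
    exact ha)
  rwa [Submodule.Quotient.mk_eq_zero] at h3

end Ext

section Poly

variable {k d n}

/-- Joining exponents. -/
def jn (a : Fin d →₀ ℕ) (q : Fin n →₀ ℕ) : Fin d ⊕ Fin n →₀ ℕ :=
  Finsupp.sumFinsuppAddEquivProdFinsupp.symm (a, q)

@[simp] lemma jn_inl (a : Fin d →₀ ℕ) (q : Fin n →₀ ℕ) (i : Fin d) : jn a q (Sum.inl i) = a i := by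
  simp [jn]

@[simp] lemma jn_inr (a : Fin d →₀ ℕ) (q : Fin n →₀ ℕ) (i : Fin n) : jn a q (Sum.inr i) = q i := by
  simp [jn]

lemma exists_jn (m : Fin d ⊕ Fin n →₀ ℕ) : ∃ a q, m = jn a q :=
  ⟨_, _, (Finsupp.sumFinsuppAddEquivProdFinsupp.symm_apply_apply m).symm⟩

lemma jn_add (a b : Fin d →₀ ℕ) (q r : Fin n →₀ ℕ) : jn (a + b) (q + r) = jn a q + jn b r := by
  rw [jn, ← Prod.mk_add_mk, map_add]; rfl

lemma jn_inj {a b : Fin d →₀ ℕ} {q r : Fin n →₀ ℕ} : jn a q = jn b r ↔ a = b ∧ q = r := by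
  rw [jn, jn, EmbeddingLike.apply_eq_iff_eq, Prod.mk_inj]

/-- The `T`-coefficient of `x^a`. -/
def cf (a : Fin d →₀ ℕ) : B k d n →ₗ[T k n] T k n where
  toFun g := coeff a (sumAlgEquiv k (Fin d) (Fin n) g)
  map_add' g h := by simp
  map_smul' t g := by
    have h1 : t • g = rename Sum.inr t * g := by rw [Algebra.smul_def]; rfl
    have h2 : sumAlgEquiv k (Fin d) (Fin n) (rename Sum.inr t) = C t :=
      DFunLike.congr_fun (sumAlgEquiv_comp_rename_inr k (Fin d) (Fin n)) t
    rw [h1, map_mul, h2, coeff_C_mul]; rfl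

lemma smul_eq_rename (t : T k n) (g : B k d n) : t • g = rename Sum.inr t * g := by
  rw [Algebra.smul_def]; rfl

lemma coeff_cf (a : Fin d →₀ ℕ) (q : Fin n →₀ ℕ) (g : B k d n) :
    coeff q (cf a g) = coeff (jn a q) g := by
  classical
  induction g using MvPolynomial.induction_on' with
  | monomial m c =>
    obtain ⟨b, r, rfl⟩ := exists_jn m
    have h1 : sumAlgEquiv k (Fin d) (Fin n) (monomial (jn b r) c) = monomial b (monomial r c) := by
      have h2 : (Finsupp.sumFinsuppAddEquivProdFinsupp (jn b r)) = (b, r) := by simp [jn]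
      simp only [sumAlgEquiv, monomial, AlgEquiv.trans_apply]
      simp [h2]
    change coeff q (coeff a (sumAlgEquiv k (Fin d) (Fin n) (monomial (jn b r) c))) = _
    rw [h1, coeff_monomial, coeff_monomial]
    simp only [jn_inj]
    by_cases h : b = a
    · simp [h, coeff_monomial]
    · simp [h]
  | add g h hg hh => rw [map_add, coeff_add, coeff_add, hg, hh]

/-- The monomial `x^a`. -/
def xm (a : Fin d →₀ ℕ) : B k d n := monomial (jn a 0) 1

lemma cf_mul_xm (a b : Fin d →₀ ℕ) (g : B k d n) : cf (a + b) (g * xm b) = cf a g := by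
  ext q
  rw [coeff_cf, coeff_cf, xm]
  have : jn (a + b) q = jn a q + jn b 0 := by rw [← jn_add, add_zero]
  rw [this, coeff_mul_monomial, mul_one]

lemma cf_xm (a b : Fin d →₀ ℕ) : cf a (xm b : B k d n) = if a = b then 1 else 0 := by
  classical
  ext q
  rw [coeff_cf, xm, coeff_monomial]
  simp only [jn_inj]
  by_cases h : a = b
  · subst h
    simp [coeff_one]
  · rw [if_neg h, if_neg]
    · simp
    · rintro ⟨h1, -⟩; exact h h1.symm

lemma monomial_jn (a : Fin d →₀ ℕ) (q : Fin n →₀ ℕ) (c : k) :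
    (monomial (jn a q) c : B k d n) = (monomial q c : T k n) • xm a := by
  rw [smul_eq_rename, rename_monomial, xm, monomial_mul, mul_one]
  congr 2
  have : Finsupp.mapDomain Sum.inr q = jn (0 : Fin d →₀ ℕ) q := by
    ext s
    rcases s with i | i
    · rw [Finsupp.mapDomain_of_notMem_range _ _ (by simp)]; simp
    · rw [Finsupp.mapDomain_apply Sum.inr_injective]; simp
  rw [this, ← jn_add, zero_add, add_zero]

/-- The integral `x`-weight. -/
def ωx (d n : ℕ) : Fin d ⊕ Fin n → ℤ := Sum.elim (fun _ => 1) (fun _ => 0)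

/-- The integral bidegree weight. -/
def ωb (d n : ℕ) : Fin d ⊕ Fin n → ℤ × ℤ := Sum.elim (fun _ => (1, 0)) (fun _ => (0, 1))

lemma weight_ωx (m : Fin d ⊕ Fin n →₀ ℕ) :
    Finsupp.weight (ωx d n) m = ((∑ i, m (Sum.inl i) : ℕ) : ℤ) := by
  rw [Finsupp.weight_apply, Finsupp.sum_fintype _ _ (by simp), Fintype.sum_sum_type]
  simp [ωx]

lemma weight_ωb (m : Fin d ⊕ Fin n →₀ ℕ) :
    Finsupp.weight (ωb d n) m =
      (((∑ i, m (Sum.inl i) : ℕ) : ℤ), ((∑ i, m (Sum.inr i) : ℕ) : ℤ)) := by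
  rw [Finsupp.weight_apply, Finsupp.sum_fintype _ _ (by simp), Fintype.sum_sum_type]
  apply Prod.ext
  · simp [ωb, Prod.fst_sum]
  · simp [ωb, Prod.snd_sum]

lemma weight_wx (m : Fin d ⊕ Fin n →₀ ℕ) :
    Finsupp.weight (wx d n) m = ∑ i, m (Sum.inl i) := by
  rw [Finsupp.weight_apply, Finsupp.sum_fintype _ _ (by simp), Fintype.sum_sum_type]
  simp [wx]

lemma weight_bwt (m : Fin d ⊕ Fin n →₀ ℕ) :
    Finsupp.weight (bwt d n) m = (∑ i, m (Sum.inl i), ∑ i, m (Sum.inr i)) := by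
  rw [Finsupp.weight_apply, Finsupp.sum_fintype _ _ (by simp), Fintype.sum_sum_type]
  apply Prod.ext
  · simp [bwt, Prod.fst_sum]
  · simp [bwt, Prod.snd_sum]

lemma wh_wx_iff (g : B k d n) (j : ℕ) :
    g.IsWeightedHomogeneous (wx d n) j ↔ g.IsWeightedHomogeneous (ωx d n) (j : ℤ) := by
  simp only [IsWeightedHomogeneous, weight_wx, weight_ωx, Nat.cast_inj]

lemma wh_bwt_iff (g : B k d n) (a b : ℕ) :
    g.IsWeightedHomogeneous (bwt d n) (a, b) ↔
      g.IsWeightedHomogeneous (ωb d n) ((a : ℤ), (b : ℤ)) := by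
  simp only [IsWeightedHomogeneous, weight_bwt, weight_ωb, Prod.mk_inj, Nat.cast_inj]

lemma wh_ωx_of_ωb {g : B k d n} {a b : ℤ} (h : g.IsWeightedHomogeneous (ωb d n) (a, b)) :
    g.IsWeightedHomogeneous (ωx d n) a := by
  intro m hm
  have := h hm
  rw [weight_ωb] at this
  rw [weight_ωx]
  exact (Prod.mk.inj this).1

lemma wh_neg {g : B k d n} {j : ℤ} (hj : j < 0) (h : g.IsWeightedHomogeneous (ωx d n) j) :
    g = 0 := by
  ext m
  by_contra hm
  have := h hm
  rw [weight_ωx] at this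
  omega

lemma wh_bneg {g : B k d n} {a j : ℤ} (hj : j < 0) (h : g.IsWeightedHomogeneous (ωb d n) (a, j)) :
    g = 0 := by
  ext m
  by_contra hm
  have := h hm
  rw [weight_ωb] at this
  have := (Prod.mk.inj this).2
  omega

lemma whc_self {σ G : Type} [AddCommGroup G] {ω : σ → G} {g : MvPolynomial σ k} {P : G}
    (h : g.IsWeightedHomogeneous ω P) : weightedHomogeneousComponent ω P g = g := by
  classical
  ext m
  rw [coeff_weightedHomogeneousComponent]
  split_ifs with hm
  · rfl
  · by_contra hc
    exact hm (h (fun h0 => hc h0.symm))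

lemma xm_wh (a : Fin d →₀ ℕ) :
    (xm a : B k d n).IsWeightedHomogeneous (ωx d n) ((∑ i, a i : ℕ) : ℤ) := by
  rw [xm]
  apply isWeightedHomogeneous_monomial
  rw [weight_ωx]; simp

/-- The powers of the `x` variables. -/
def xp (k : Type) [Field k] (d n M : ℕ) : Fin d → B k d n := fun i => X (Sum.inl i) ^ (M + 1)

lemma mem_Is_xp (M r : ℕ) (hr : r ≤ d) (g : B k d n) :
    g ∈ Is (ext0 (xp k d n M)) r ↔ ∀ m, coeff m g ≠ 0 → ∃ i : Fin d, i.1 < r ∧ M < m (Sum.inl i) := by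
  have e : Is (ext0 (xp k d n M)) r = Ideal.span ((fun s => monomial s (1 : k)) ''
      {s | ∃ i : Fin d, i.1 < r ∧ s = Finsupp.single (Sum.inl i) (M + 1)}) := by
    rw [Is_eq_span]
    congr 1
    ext b
    simp only [Set.mem_image, Set.mem_Iio, Set.mem_ofPred_eq]
    constructor
    · rintro ⟨i, hi, rfl⟩
      refine ⟨_, ⟨⟨i, by omega⟩, hi, rfl⟩, ?_⟩
      rw [ext0_lt _ _ (by omega), xp, X_pow_eq_monomial]
    · rintro ⟨_, ⟨i, hi, rfl⟩, rfl⟩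
      refine ⟨i, hi, ?_⟩
      rw [ext0_lt _ _ i.2, xp, X_pow_eq_monomial]
  rw [e, mem_ideal_span_monomial_image]
  refine forall_congr' fun m => ?_
  rw [mem_support_iff]
  refine imp_congr_right fun _ => ?_
  constructor
  · rintro ⟨_, ⟨i, hi, rfl⟩, h⟩
    refine ⟨i, hi, ?_⟩
    have := h (Sum.inl i)
    simp at this
    omega
  · rintro ⟨i, hi, h⟩
    refine ⟨_, ⟨i, hi, rfl⟩, ?_⟩
    rw [Finsupp.single_le_iff]
    omega

lemma WReg_xp (M : ℕ) : WReg (ext0 (xp k d n M)) d := by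
  intro r hr a ha
  rw [mem_Is_xp _ _ hr.le] at *
  intro m hm
  rw [ext0_lt _ _ hr, xp, X_pow_eq_monomial] at ha
  obtain ⟨i, hi, h⟩ := ha (Finsupp.single (Sum.inl ⟨r, hr⟩) (M + 1) + m) (by
    rwa [coeff_monomial_mul, one_mul])
  refine ⟨i, hi, ?_⟩
  rwa [Finsupp.add_apply, Finsupp.single_eq_of_ne, zero_add] at h
  simp only [ne_eq, Sum.inl.injEq]
  intro h'
  subst h'
  exact lt_irrefl _ hi

/-- The constant exponent. -/
def cst (d M : ℕ) : Fin d →₀ ℕ := Finsupp.equivFunOnFinite.symm fun _ => M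

@[simp] lemma cst_apply (M : ℕ) (i : Fin d) : cst d M i = M := rfl

lemma top_J {M : ℕ} {g : B k d n} (h : g ∈ Is (ext0 (xp k d n M)) d) : cf (cst d M) g = 0 := by
  ext q
  rw [coeff_cf, coeff_zero]
  by_contra hc
  rw [mem_Is_xp _ _ le_rfl] at h
  obtain ⟨i, -, h⟩ := h _ hc
  simp at h

lemma mem_J_of {M : ℕ} {g : B k d n} (h : ∀ a : Fin d →₀ ℕ, a ≤ cst d M → cf a g = 0) :
    g ∈ Is (ext0 (xp k d n M)) d := by
  rw [mem_Is_xp _ _ le_rfl]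
  intro m hm
  obtain ⟨a, q, rfl⟩ := exists_jn m
  by_contra hc
  push Not at hc
  apply hm
  rw [← coeff_cf, h a, coeff_zero]
  intro i
  simpa using hc i i.2

lemma top_whc (M : ℕ) (h : B k d n) :
    cf (cst d M) (weightedHomogeneousComponent (ωx d n) ((d : ℤ) * M) h) = cf (cst d M) h := by
  ext q
  rw [coeff_cf, coeff_cf, coeff_weightedHomogeneousComponent, if_pos]
  rw [weight_ωx]
  simp

/-- Only the relevant component of `w` matters. -/
lemma top_whc_mul (M : ℕ) (w g : B k d n) (D j : ℤ) (hD : D + j = d * M)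
    (hg : g.IsWeightedHomogeneous (ωx d n) j) :
    cf (cst d M) (weightedHomogeneousComponent (ωx d n) D w * g) = cf (cst d M) (w * g) := by
  rw [← top_whc M (w * g), mul_comm w g, whc_mul _ hg, mul_comm g]
  congr 4
  omega

lemma top_b_coeff (M : ℕ) (h : B k d n) (Q : ℤ) (q : Fin n →₀ ℕ) :
    coeff q (cf (cst d M) (weightedHomogeneousComponent (ωb d n) ((d : ℤ) * M, Q) h)) =
      if ((∑ i, q i : ℕ) : ℤ) = Q then coeff q (cf (cst d M) h) else 0 := by
  rw [coeff_cf, coeff_cf, coeff_weightedHomogeneousComponent, weight_ωb]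
  simp

lemma mem_TcompZ (Q : ℤ) (t : T k n) :
    t ∈ TcompZ k n Q ↔ ∀ q, coeff q t ≠ 0 → ((∑ i, q i : ℕ) : ℤ) = Q := by
  rw [TcompZ]
  split_ifs with h
  · rw [mem_homogeneousSubmodule]
    have : ∀ q : Fin n →₀ ℕ, Finsupp.weight 1 q = ∑ i, q i := by
      intro q
      rw [Finsupp.weight_apply, Finsupp.sum_fintype _ _ (by simp)]; simp
    simp only [IsHomogeneous, IsWeightedHomogeneous, this]
    refine forall_congr' fun q => imp_congr_right fun _ => ?_
    omega
  · rw [Submodule.mem_bot]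
    constructor
    · rintro rfl q hq; simp at hq
    · intro hq
      ext q
      by_contra hc
      have := hq q hc
      omega

end Poly

/-! ### Strands and local cohomology -/

section Strand

variable {k d n}

lemma wh_ind {σ G : Type} [AddCommGroup G] {ω : σ → G} {P : G} (Q : MvPolynomial σ k → Prop)
    (h0 : Q 0) (hadd : ∀ g h, Q g → Q h → Q (g + h))
    (hm : ∀ m c, Finsupp.weight ω m = P → Q (monomial m c))
    {g : MvPolynomial σ k} (hg : g.IsWeightedHomogeneous ω P) : Q g := by
  rw [← support_sum_monomial_coeff g]
  refine Finset.sum_induction _ Q hadd h0 ?_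
  intro m hmm
  exact hm m _ (hg (mem_support_iff.1 hmm))

lemma wh_smul {j : ℤ} (t : T k n) {g : B k d n} (hg : g.IsWeightedHomogeneous (ωx d n) j) :
    (t • g).IsWeightedHomogeneous (ωx d n) j := by
  induction t using MvPolynomial.induction_on' with
  | monomial q c =>
    rw [smul_eq_rename, rename_monomial]
    have := (isWeightedHomogeneous_monomial (ωx d n) (Finsupp.mapDomain Sum.inr q) c
      (m := 0) (by
        rw [weight_ωx]
        have : ∀ i : Fin d, Finsupp.mapDomain (Sum.inr : Fin n → Fin d ⊕ Fin n) q (Sum.inl i) = 0 := by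
          intro i
          rw [Finsupp.mapDomain_of_notMem_range _ _ (by simp)]
        simp [this])).mul hg
    rwa [zero_add] at this
  | add t t' ht ht' =>
    rw [add_smul]
    exact Submodule.add_mem (weightedHomogeneousSubmodule k (ωx d n) j) ht ht'

lemma mk_tsmul (I : Ideal (B k d n)) (t : T k n) (g : B k d n) :
    Ideal.Quotient.mk I (t • g) = t • Ideal.Quotient.mk I g := rfl

lemma mem_SxDegZ (I : Ideal (B k d n)) (j : ℤ) (s : B k d n ⧸ I) :
    s ∈ SxDegZ k d n I j ↔
      ∃ g : B k d n, g.IsWeightedHomogeneous (ωx d n) j ∧ Ideal.Quotient.mk I g = s := by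
  rw [SxDegZ]
  split_ifs with hj
  · have hj' : ((j.toNat : ℕ) : ℤ) = j := Int.toNat_of_nonneg hj
    rw [SxDeg]
    constructor
    · intro h
      induction h using Submodule.span_induction with
      | mem s hs =>
        obtain ⟨g, hg, rfl⟩ := hs
        refine ⟨g, ?_, rfl⟩
        have := (wh_wx_iff g j.toNat).1 hg
        rwa [hj'] at this
      | zero => exact ⟨0, isWeightedHomogeneous_zero _ _ _, map_zero _⟩
      | add s t _ _ hs ht =>
        obtain ⟨g, hg, rfl⟩ := hs
        obtain ⟨h, hh, rfl⟩ := ht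
        exact ⟨g + h, Submodule.add_mem (weightedHomogeneousSubmodule k (ωx d n) j) hg hh,
          map_add _ _ _⟩
      | smul t s _ hs =>
        obtain ⟨g, hg, rfl⟩ := hs
        exact ⟨t • g, wh_smul t hg, mk_tsmul I t g⟩
    · rintro ⟨g, hg, rfl⟩
      refine Submodule.subset_span ⟨g, ?_, rfl⟩
      rw [← hj'] at hg
      exact (wh_wx_iff g j.toNat).2 hg
  · rw [Submodule.mem_bot]
    constructor
    · rintro rfl
      exact ⟨0, isWeightedHomogeneous_zero _ _ _, map_zero _⟩
    · rintro ⟨g, hg, rfl⟩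
      rw [wh_neg (by omega) hg, map_zero]

lemma H0_of (I : Ideal (B k d n)) (N : ℕ) (s : B k d n ⧸ I)
    (h : ∀ i : Fin d, (X (Sum.inl i) ^ N : B k d n) • s = 0) : s ∈ H0 k d n I := by
  have h1 : mxB k d n ≤ (Ideal.torsionOf (B k d n) (B k d n ⧸ I) s).radical := by
    rw [mxB, Ideal.span_le]
    rintro _ ⟨i, rfl⟩
    exact ⟨N, (Ideal.mem_torsionOf_iff _ _).2 (h i)⟩
  obtain ⟨K, hK⟩ := Ideal.exists_pow_le_of_le_radical_of_fg h1 (IsNoetherian.noetherian _)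
  rw [H0]
  refine Submodule.mem_iSup_of_mem K ?_
  rw [Submodule.mem_torsionBySet_iff]
  rintro ⟨a, ha⟩
  exact (Ideal.mem_torsionOf_iff _ _).1 (hK ha)

lemma H0_bound (I : Ideal (B k d n)) : ∃ N0 : ℕ, ∀ s ∈ H0 k d n I, ∀ N ≥ N0, ∀ i : Fin d,
    (X (Sum.inl i) ^ N : B k d n) • s = 0 := by
  have hmono : Monotone fun N : ℕ => Submodule.torsionBySet (B k d n) (B k d n ⧸ I)
      ((mxB k d n ^ N : Ideal (B k d n)) : Set (B k d n)) := by
    intro a b hab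
    exact Submodule.torsionBySet_le_torsionBySet_of_subset (Ideal.pow_le_pow_right hab)
  obtain ⟨N0, hN0⟩ := monotone_stabilizes_iff_noetherian.2
    (inferInstance : IsNoetherian (B k d n) (B k d n ⧸ I)) ⟨_, hmono⟩
  refine ⟨N0, fun s hs N hN i => ?_⟩
  have h1 : s ∈ Submodule.torsionBySet (B k d n) (B k d n ⧸ I)
      ((mxB k d n ^ N0 : Ideal (B k d n)) : Set (B k d n)) := by
    have : H0 k d n I ≤ Submodule.torsionBySet (B k d n) (B k d n ⧸ I)
      ((mxB k d n ^ N0 : Ideal (B k d n)) : Set (B k d n)) := by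
      rw [H0]
      refine iSup_le fun K => ?_
      rcases le_total K N0 with h | h
      · exact hmono h
      · exact (hN0 K h).ge
    exact this hs
  rw [Submodule.mem_torsionBySet_iff] at h1
  have h2 : (X (Sum.inl i) : B k d n) ∈ mxB k d n := Ideal.subset_span ⟨i, rfl⟩
  exact h1 ⟨_, Ideal.pow_le_pow_right hN (Ideal.pow_mem_pow h2 N)⟩

lemma exists_equiv_of_rel {R M N : Type} [CommRing R] [AddCommGroup M] [AddCommGroup N]
    [Module R M] [Module R N] (r : M → N → Prop)
    (hadd : ∀ s s' t t', r s t → r s' t' → r (s + s') (t + t'))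
    (hsmul : ∀ (c : R) s t, r s t → r (c • s) (c • t))
    (htot : ∀ s, ∃ t, r s t) (hsurj : ∀ t, ∃ s, r s t)
    (huniq : ∀ t, r 0 t → t = 0) (hinj : ∀ s, r s 0 → s = 0) :
    ∃ e : M ≃ₗ[R] N, ∀ s, r s (e s) := by
  choose F hF using htot
  have hu : ∀ s t t', r s t → r s t' → t = t' := by
    intro s t t' h h'
    have := hadd _ _ _ _ h (hsmul (-1) _ _ h')
    have := huniq (t + (-1 : R) • t') (by simpa using this)
    rw [neg_one_smul, ← sub_eq_add_neg] at this
    exact sub_eq_zero.1 this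
  let G : M →ₗ[R] N :=
    { toFun := F
      map_add' := fun s s' => hu _ _ _ (hF _) (hadd _ _ _ _ (hF _) (hF _))
      map_smul' := fun c s => hu _ _ _ (hF _) (hsmul c _ _ (hF _)) }
  refine ⟨LinearEquiv.ofBijective G ⟨?_, ?_⟩, fun s => hF s⟩
  · rw [injective_iff_map_eq_zero]
    intro s hs
    apply hinj
    rw [← hs]
    exact hF s
  · intro t
    obtain ⟨s, hs⟩ := hsurj t
    exact ⟨s, hu _ _ _ (hF s) hs⟩

end Strand

/-! ### The correspondence -/

section Corr

variable {k d n}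

/-- The ideal of the powers of the `x` variables. -/
abbrev JJ (k : Type) [Field k] (d n M : ℕ) : Ideal (B k d n) := Is (ext0 (xp k d n M)) d

/-- The correspondence between the socle-type elements. -/
abbrev ZZ (f : Fin d → B k d n) (M : ℕ) : Submodule (B k d n) (B k d n × B k d n) :=
  ZR (ext0 f) (ext0 (xp k d n M)) d

variable {f : Fin d → B k d n} {M : ℕ} {I : Ideal (B k d n)}

lemma ZZ_key (hI : I = Is (ext0 f) d) (hf : WReg (ext0 f) d) {u w : B k d n}
    (h : (u, w) ∈ ZZ f M) (c : B k d n) : c * u ∈ I ↔ c * w ∈ JJ k d n M := by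
  obtain ⟨z, hz, hu, hw⟩ := h
  simp only at hu hw
  subst hu hw hI
  exact Chain.key hf (WReg_xp M) hz c

lemma ZZ_mem (hI : I = Is (ext0 f) d) (hf : WReg (ext0 f) d) {u w : B k d n}
    (h : (u, w) ∈ ZZ f M) : u ∈ I ↔ w ∈ JJ k d n M := by
  simpa using ZZ_key hI hf h 1

lemma ZZ_of_u (hI : I = Is (ext0 f) d) (hf : WReg (ext0 f) d) (u : B k d n)
    (hu : ∀ i, X (Sum.inl i) ^ (M + 1) * u ∈ I) : ∃ w, (u, w) ∈ ZZ f M := by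
  subst hI
  obtain ⟨z, hz, h⟩ := Chain.exists_of_u hf (WReg_xp M) u (by
    intro s hs
    rw [ext0_lt _ _ hs]
    exact hu ⟨s, hs⟩)
  exact ⟨_, z, hz, h, rfl⟩

lemma ZZ_of_w (w : B k d n) (hw : ∀ i, f i * w ∈ JJ k d n M) : ∃ u, (u, w) ∈ ZZ f M := by
  obtain ⟨z, hz, h⟩ := Chain.exists_of_w (f := ext0 f) (WReg_xp M) w (by
    intro s hs
    rw [ext0_lt _ _ hs]
    exact hw ⟨s, hs⟩)
  exact ⟨_, z, hz, rfl, h⟩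

lemma ZZ_x (hI : I = Is (ext0 f) d) (hf : WReg (ext0 f) d) {u w : B k d n}
    (h : (u, w) ∈ ZZ f M) (i : Fin d) : X (Sum.inl i) ^ (M + 1) * u ∈ I := by
  rw [ZZ_key hI hf h]
  apply Ideal.mul_mem_right
  have := Is_x_mem (ext0 (xp k d n M)) d i i.2
  rwa [ext0_lt _ _ i.2] at this

lemma ZZ_top (hI : I = Is (ext0 f) d) (hf : WReg (ext0 f) d) {u w : B k d n}
    (h : (u, w) ∈ ZZ f M) {g : B k d n} (hg : g ∈ I) : cf (cst d M) (w * g) = 0 := by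
  apply top_J
  rw [mul_comm]
  exact (ZZ_key hI hf h g).1 (Ideal.mul_mem_right _ _ hg)

lemma xp_wh (M : ℕ) (i : Fin d) :
    (xp k d n M i).IsWeightedHomogeneous (ωx d n) ((M : ℤ) + 1) := by
  rw [xp, X_pow_eq_monomial]
  apply isWeightedHomogeneous_monomial
  simp [Finsupp.weight_single, ωx]

lemma xp_bwh (M : ℕ) (i : Fin d) :
    (xp k d n M i).IsWeightedHomogeneous (ωb d n) ((M : ℤ) + 1, 0) := by
  rw [xp, X_pow_eq_monomial]
  apply isWeightedHomogeneous_monomial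
  simp [Finsupp.weight_single, ωb]

variable {α β : Fin d → ℕ}

lemma I_whc (hI : I = Is (ext0 f) d)
    (hb : ∀ i, (f i).IsWeightedHomogeneous (ωb d n) ((α i : ℤ), (β i : ℤ))) (P : ℤ)
    {g : B k d n} (hg : g ∈ I) : weightedHomogeneousComponent (ωx d n) P g ∈ I := by
  subst hI
  refine Is_whc _ _ (ext0 fun i => (α i : ℤ)) _ ?_ _ _ hg
  intro s hs
  rw [ext0_lt _ _ hs, ext0_lt _ _ hs]
  exact wh_ωx_of_ωb (hb _)

lemma I_bwhc (hI : I = Is (ext0 f) d)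
    (hb : ∀ i, (f i).IsWeightedHomogeneous (ωb d n) ((α i : ℤ), (β i : ℤ))) (P : ℤ × ℤ)
    {g : B k d n} (hg : g ∈ I) : weightedHomogeneousComponent (ωb d n) P g ∈ I := by
  subst hI
  refine Is_whc _ _ (ext0 fun i => ((α i : ℤ), (β i : ℤ))) _ ?_ _ _ hg
  intro s hs
  rw [ext0_lt _ _ hs, ext0_lt _ _ hs]
  exact hb _

lemma ZZ_px (hb : ∀ i, (f i).IsWeightedHomogeneous (ωb d n) ((α i : ℤ), (β i : ℤ)))
    {u w : B k d n} (h : (u, w) ∈ ZZ f M) (i D : ℤ)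
    (hD : D = i + d * (M + 1) - ∑ i, (α i : ℤ)) :
    (weightedHomogeneousComponent (ωx d n) i u, weightedHomogeneousComponent (ωx d n) D w) ∈
      ZZ f M := by
  have := ZR_whc (ωx d n) (ext0 f) (ext0 (xp k d n M)) (ext0 fun i => (α i : ℤ))
    (ext0 fun _ : Fin d => (M : ℤ) + 1) d
    (by
      intro s hs
      rw [ext0_lt _ _ hs, ext0_lt _ _ hs]
      exact wh_ωx_of_ωb (hb _))
    (by
      intro s hs
      rw [ext0_lt _ _ hs, ext0_lt _ _ hs]
      exact xp_wh _ _) i u w h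
  rw [dsum_ext0, dsum_ext0] at this
  have e : D = i + ∑ _i : Fin d, ((M : ℤ) + 1) - ∑ i, (α i : ℤ) := by rw [hD]; simp
  rw [e]
  exact this

lemma ZZ_pb (hb : ∀ i, (f i).IsWeightedHomogeneous (ωb d n) ((α i : ℤ), (β i : ℤ)))
    {u w : B k d n} (h : (u, w) ∈ ZZ f M) (i D b Q : ℤ)
    (hD : D = i + d * (M + 1) - ∑ i, (α i : ℤ)) (hQ : Q = b - ∑ i, (β i : ℤ)) :
    (weightedHomogeneousComponent (ωb d n) (i, b) u,
      weightedHomogeneousComponent (ωb d n) (D, Q) w) ∈ ZZ f M := by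
  have := ZR_whc (ωb d n) (ext0 f) (ext0 (xp k d n M)) (ext0 fun i => ((α i : ℤ), (β i : ℤ)))
    (ext0 fun _ : Fin d => ((M : ℤ) + 1, (0 : ℤ))) d
    (by
      intro s hs
      rw [ext0_lt _ _ hs, ext0_lt _ _ hs]
      exact hb _)
    (by
      intro s hs
      rw [ext0_lt _ _ hs, ext0_lt _ _ hs]
      exact xp_bwh _ _) (i, b) u w h
  rw [dsum_ext0, dsum_ext0] at this
  have e : (D, Q) = (i, b) + ∑ _i : Fin d, ((M : ℤ) + 1, (0 : ℤ)) -
      ∑ i, ((α i : ℤ), (β i : ℤ)) := by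
    rw [hD, hQ]
    apply Prod.ext
    · simp [Prod.fst_sum]
    · simp [Prod.snd_sum]
  rw [e]
  exact this

lemma w_inj (w : B k d n) (D j : ℤ) (hD : D + j = d * M)
    (h : ∀ g : B k d n, g.IsWeightedHomogeneous (ωx d n) j → cf (cst d M) (w * g) = 0) :
    weightedHomogeneousComponent (ωx d n) D w ∈ JJ k d n M := by
  apply mem_J_of
  intro a ha
  by_cases hs : ((∑ i, a i : ℕ) : ℤ) = D
  · have h1 : (xm (cst d M - a) : B k d n).IsWeightedHomogeneous (ωx d n) j := by
      have := xm_wh (k := k) (n := n) (cst d M - a)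
      convert this using 1
      have h2 : ∑ i, (cst d M - a) i + ∑ i, a i = d * M := by
        rw [← Finset.sum_add_distrib]
        have : ∀ i, (cst d M - a) i + a i = M := by
          intro i
          have := ha i
          rw [cst_apply] at this
          simp; omega
        simp only [this]
        simp
      have h3 : ((∑ i, (cst d M - a) i : ℕ) : ℤ) + ((∑ i, a i : ℕ) : ℤ) = d * M := by
        exact_mod_cast h2
      omega
    rw [← cf_mul_xm a (cst d M - a), add_tsub_cancel_of_le ha, top_whc_mul M w _ D j hD h1]
    exact h _ h1
  · ext q
    rw [coeff_cf, coeff_weightedHomogeneousComponent, if_neg, coeff_zero]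
    rw [weight_ωx]
    simpa using hs

lemma u_sub_mem (hI : I = Is (ext0 f) d)
    (hb : ∀ i, (f i).IsWeightedHomogeneous (ωb d n) ((α i : ℤ), (β i : ℤ))) {u : B k d n} {i : ℤ}
    (hu : Ideal.Quotient.mk I u ∈ SxDegZ k d n I i) :
    u - weightedHomogeneousComponent (ωx d n) i u ∈ I := by
  obtain ⟨u0, h0, h⟩ := (mem_SxDegZ _ _ _).1 hu
  rw [eq_comm, Ideal.Quotient.eq] at h
  have h1 := I.sub_mem h (I_whc hI hb i h)
  rw [map_sub, whc_self h0] at h1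
  convert h1 using 1
  ring

lemma u_sub_bmem (hI : I = Is (ext0 f) d)
    (hb : ∀ i, (f i).IsWeightedHomogeneous (ωb d n) ((α i : ℤ), (β i : ℤ))) {u : B k d n} {a b : ℕ}
    (hu : Ideal.Quotient.mk I u ∈ Scomp k d n I (a, b)) :
    u - weightedHomogeneousComponent (ωb d n) ((a : ℤ), (b : ℤ)) u ∈ I := by
  obtain ⟨u0, h0, h⟩ := hu
  replace h0 := (wh_bwt_iff _ _ _).1 h0
  replace h : Ideal.Quotient.mk I u0 = Ideal.Quotient.mk I u := h
  rw [eq_comm, Ideal.Quotient.eq] at h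
  have h1 := I.sub_mem h (I_bwhc hI hb (a, b) h)
  rw [map_sub, whc_self h0] at h1
  convert h1 using 1
  ring

lemma uw_inj (hI : I = Is (ext0 f) d) (hf : WReg (ext0 f) d)
    (hb : ∀ i, (f i).IsWeightedHomogeneous (ωb d n) ((α i : ℤ), (β i : ℤ)))
    {u w : B k d n} (hz : (u, w) ∈ ZZ f M) (i D j : ℤ)
    (hD : D = i + d * (M + 1) - ∑ i, (α i : ℤ)) (hj : D + j = d * M)
    (hu : Ideal.Quotient.mk I u ∈ SxDegZ k d n I i)
    (h : ∀ g : B k d n, g.IsWeightedHomogeneous (ωx d n) j → cf (cst d M) (w * g) = 0) :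
    u ∈ I := by
  have h1 := (ZZ_mem hI hf (ZZ_px hb hz i D hD)).2 (w_inj w D j hj h)
  have := I.add_mem h1 (u_sub_mem hI hb hu)
  convert this using 1
  ring

lemma exists_w (j : ℤ) (hM : j ≤ M) (φ : SxDegZ k d n I j →ₗ[T k n] T k n) :
    ∃ w : B k d n, ∀ (g : B k d n), g.IsWeightedHomogeneous (ωx d n) j →
      ∀ h : Ideal.Quotient.mk I g ∈ SxDegZ k d n I j,
        φ ⟨Ideal.Quotient.mk I g, h⟩ = cf (cst d M) (w * g) := by
  classical
  let ψ : (Fin d →₀ ℕ) → T k n := fun b =>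
    if h : Ideal.Quotient.mk I (xm b) ∈ SxDegZ k d n I j then φ ⟨_, h⟩ else 0
  let w : B k d n := ∑ a ∈ Finset.Iic (cst d M), ψ (cst d M - a) • xm a
  have hw : ∀ b ≤ cst d M, cf (cst d M) (w * xm b) = ψ b := by
    intro b hb
    have h1 : cf (cst d M) (w * xm b) = cf (cst d M - b) w := by
      rw [← cf_mul_xm (cst d M - b) b, tsub_add_cancel_of_le hb]
    rw [h1, map_sum]
    simp only [map_smul, cf_xm]
    rw [Finset.sum_eq_single (cst d M - b)]
    · rw [if_pos rfl, smul_eq_mul, mul_one]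
      congr 1
      ext i
      have := hb i
      simp at this ⊢
      omega
    · intro a _ ha
      rw [if_neg (Ne.symm ha), smul_zero]
    · intro h
      exact absurd (Finset.mem_Iic.2 tsub_le_self) h
  refine ⟨w, ?_⟩
  intro g hg h
  suffices hQ : ∃ h : Ideal.Quotient.mk I g ∈ SxDegZ k d n I j,
        φ ⟨Ideal.Quotient.mk I g, h⟩ = cf (cst d M) (w * g) by
    obtain ⟨_, hQ⟩ := hQ
    exact hQ
  refine wh_ind (fun g => ∃ h : Ideal.Quotient.mk I g ∈ SxDegZ k d n I j,
        φ ⟨Ideal.Quotient.mk I g, h⟩ = cf (cst d M) (w * g)) ?_ ?_ ?_ hg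
  · refine ⟨by rw [map_zero]; exact Submodule.zero_mem _, ?_⟩
    rw [mul_zero, map_zero (cf (cst d M))]
    exact map_zero φ
  · rintro g h ⟨hg1, hg2⟩ ⟨hh1, hh2⟩
    refine ⟨by rw [map_add]; exact Submodule.add_mem _ hg1 hh1, ?_⟩
    rw [mul_add, map_add (cf (cst d M)), ← hg2, ← hh2, ← map_add φ]
    rfl
  · intro m c hm
    obtain ⟨b, q, rfl⟩ := exists_jn m
    rw [weight_ωx] at hm
    simp only [jn_inl] at hm
    have h1 : Ideal.Quotient.mk I (xm b) ∈ SxDegZ k d n I j := by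
      rw [mem_SxDegZ]
      refine ⟨xm b, ?_, rfl⟩
      rw [← hm]
      exact xm_wh b
    have hb : b ≤ cst d M := by
      intro i
      have h2 : b i ≤ ∑ i, b i := Finset.single_le_sum (fun _ _ => Nat.zero_le _) (Finset.mem_univ i)
      rw [cst_apply]
      omega
    rw [monomial_jn]
    refine ⟨by rw [mk_tsmul]; exact Submodule.smul_mem _ _ h1, ?_⟩
    rw [mul_smul_comm, map_smul (cf (cst d M)), hw b hb]
    have h3 : ψ b = φ ⟨_, h1⟩ := dif_pos h1
    rw [h3, ← map_smul φ]
    rfl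

end Corr

/-! ### Bihomogeneous pairing -/

section Pair

variable {k d n} {M : ℕ}

lemma top_wh_ne {h : B k d n} {e : ℤ} (hh : h.IsWeightedHomogeneous (ωx d n) e)
    (he : e ≠ d * M) : cf (cst d M) h = 0 := by
  ext q
  rw [coeff_cf, coeff_zero]
  by_contra hc
  have := hh hc
  rw [weight_ωx] at this
  apply he
  rw [← this]
  simp

lemma top_pb (w g : B k d n) (D j Q q : ℤ) (hD : D + j = d * M)
    (hg : g.IsWeightedHomogeneous (ωb d n) (j, q)) :
    cf (cst d M) (weightedHomogeneousComponent (ωb d n) (D, Q) w * g) =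
      cf (cst d M) (weightedHomogeneousComponent (ωb d n) ((d : ℤ) * M, q + Q) (w * g)) := by
  rw [mul_comm w g, whc_mul _ hg, mul_comm g]
  congr 4
  rw [← hD]
  simp

lemma top_pb_mem (w g : B k d n) (D j Q q : ℤ) (hD : D + j = d * M)
    (hg : g.IsWeightedHomogeneous (ωb d n) (j, q)) :
    cf (cst d M) (weightedHomogeneousComponent (ωb d n) (D, Q) w * g) ∈ TcompZ k n (q + Q) := by
  rw [top_pb w g D j Q q hD hg, mem_TcompZ]
  intro r hr
  rw [top_b_coeff] at hr
  by_contra hc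
  rw [if_neg hc] at hr
  exact hr rfl

lemma top_pb_eq (w g : B k d n) (D j Q q : ℤ) (hD : D + j = d * M)
    (hg : g.IsWeightedHomogeneous (ωb d n) (j, q))
    (h : cf (cst d M) (w * g) ∈ TcompZ k n (q + Q)) :
    cf (cst d M) (weightedHomogeneousComponent (ωb d n) (D, Q) w * g) = cf (cst d M) (w * g) := by
  rw [top_pb w g D j Q q hD hg]
  rw [mem_TcompZ] at h
  ext r
  rw [top_b_coeff]
  split_ifs with hr
  · rfl
  · by_contra hc
    exact hr (h r (Ne.symm hc))

/-- The relation realizing the duality. -/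
def Rel (f : Fin d → B k d n) (M : ℕ) (I : Ideal (B k d n)) (i j : ℤ)
    (s : AcompZ k d n I i) (φ : SxDegZ k d n I j →ₗ[T k n] T k n) : Prop :=
  ∃ u w : B k d n, (u, w) ∈ ZZ f M ∧ Ideal.Quotient.mk I u = s ∧
    ∀ g : B k d n, g.IsWeightedHomogeneous (ωx d n) j →
      ∀ h : Ideal.Quotient.mk I g ∈ SxDegZ k d n I j,
        φ ⟨Ideal.Quotient.mk I g, h⟩ = cf (cst d M) (w * g)

end Pair

set_option maxHeartbeats 4000000

/-- duality, graded strands.  For every integer `i` there is a graded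
isomorphism of `T`-modules `A_i ≅ Hom_T(S_{δ−i}, T(−τ))`: a `T`-linear isomorphism which
identifies, for each internal degree `b`, the component `A_{(i,b)}` with the homogeneous
`T`-homomorphisms `S_{δ−i} → T` of degree `b − τ` (i.e. of degree `b` into `T(−τ)`). -/
theorem strand_duality
    (f : Fin d → B k d n) (α β : Fin d → ℕ)
    (hfm : ∀ i, f i ∈ mxB k d n)
    (hreg : RingTheory.Sequence.IsRegular (B k d n) (List.ofFn f))
    (hbihom : ∀ i, f i ∈ weightedHomogeneousSubmodule k (bwt d n) (α i, β i))
    (hne : ∀ i, f i ≠ 0)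
    (hI : I = Ideal.span (Set.range f))
    (δ τ : ℤ) (hδ : δ = (∑ i, (α i : ℤ)) - d) (hτ : τ = ∑ i, (β i : ℤ))
    (i : ℤ) :
    ∃ e : (AcompZ k d n I i) ≃ₗ[T k n] ((SxDegZ k d n I (δ - i)) →ₗ[T k n] T k n),
      (∀ (a b : ℕ), (a : ℤ) = i →
        ∀ s : AcompZ k d n I i, (s : B k d n ⧸ I) ∈ Scomp k d n I (a, b) →
          ∀ (c q : ℕ), (c : ℤ) = δ - i →
            ∀ t : SxDegZ k d n I (δ - i), (t : B k d n ⧸ I) ∈ Scomp k d n I (c, q) →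
              e s t ∈ TcompZ k n ((q : ℤ) + ((b : ℤ) - τ))) ∧
      (∀ (a b : ℕ), (a : ℤ) = i →
        ∀ φ : (SxDegZ k d n I (δ - i)) →ₗ[T k n] T k n,
          (∀ (c q : ℕ), (c : ℤ) = δ - i →
            ∀ t : SxDegZ k d n I (δ - i), (t : B k d n ⧸ I) ∈ Scomp k d n I (c, q) →
              φ t ∈ TcompZ k n ((q : ℤ) + ((b : ℤ) - τ))) →
          ((e.symm φ : AcompZ k d n I i) : B k d n ⧸ I) ∈ Scomp k d n I (a, b)) := by
  have hI' : I = Is (ext0 f) d := by rw [hI, Is_ext0]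
  have hf : WReg (ext0 f) d := WReg_of_isRegular f hreg
  have hb : ∀ i, (f i).IsWeightedHomogeneous (ωb d n) ((α i : ℤ), (β i : ℤ)) :=
    fun i => (wh_bwt_iff _ _ _).1 (hbihom i)
  obtain ⟨N0, hN0⟩ := H0_bound I
  obtain ⟨j, hj⟩ : ∃ j, j = δ - i := ⟨_, rfl⟩
  rw [← hj]
  obtain ⟨M, hM0, hMj⟩ : ∃ M : ℕ, N0 ≤ M ∧ j ≤ M :=
    ⟨max N0 j.toNat, le_max_left _ _, by
      have := le_max_right N0 j.toNat
      omega⟩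
  obtain ⟨D, hD⟩ : ∃ D : ℤ, D = i + d * (M + 1) - ∑ i, (α i : ℤ) := ⟨_, rfl⟩
  have hDj : D + j = d * M := by
    rw [hD, hj, hδ]; ring
  have hmem : ∀ g : B k d n, g.IsWeightedHomogeneous (ωx d n) j →
      Ideal.Quotient.mk I g ∈ SxDegZ k d n I j := fun g hg => (mem_SxDegZ _ _ _).2 ⟨g, hg, rfl⟩
  have hext : ∀ φ φ' : SxDegZ k d n I j →ₗ[T k n] T k n,
      (∀ (g : B k d n) (hg : g.IsWeightedHomogeneous (ωx d n) j),
        φ ⟨_, hmem g hg⟩ = φ' ⟨_, hmem g hg⟩) → φ = φ' := by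
    intro φ φ' h
    ext1 ⟨t, ht⟩
    obtain ⟨g, hg, rfl⟩ := (mem_SxDegZ _ _ _).1 ht
    exact h g hg
  obtain ⟨e, he⟩ : ∃ e : (AcompZ k d n I i) ≃ₗ[T k n] ((SxDegZ k d n I j) →ₗ[T k n] T k n),
      ∀ s, Rel f M I i j s (e s) := by
    apply exists_equiv_of_rel
    · rintro s s' φ φ' ⟨u, w, hz, hu, hw⟩ ⟨u', w', hz', hu', hw'⟩
      refine ⟨u + u', w + w', Submodule.add_mem _ hz hz', ?_, ?_⟩
      · rw [map_add, hu, hu']; rfl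
      · intro g hg h
        rw [add_mul, map_add (cf (cst d M)), ← hw g hg h, ← hw' g hg h]
        rfl
    · rintro t s φ ⟨u, w, hz, hu, hw⟩
      refine ⟨t • u, t • w, ?_, ?_, ?_⟩
      · have := Submodule.smul_mem (ZZ f M) (rename Sum.inr t) hz
        rw [smul_eq_rename, smul_eq_rename]
        exact this
      · rw [mk_tsmul, hu]; rfl
      · intro g hg h
        rw [smul_mul_assoc, map_smul (cf (cst d M)), ← hw g hg h]
        rfl
    · -- totality
      rintro ⟨s, hs⟩
      obtain ⟨u, rfl⟩ := Ideal.Quotient.mk_surjective s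
      obtain ⟨w, hz⟩ := ZZ_of_u (M := M) hI' hf u (by
        intro l
        have := hN0 _ hs.1 (M + 1) (by omega) l
        rw [← Ideal.Quotient.eq_zero_iff_mem]
        exact this)
      let ψ : (B k d n ⧸ I) →ₗ[T k n] T k n :=
        { toFun := Quotient.lift (fun g => cf (cst d M) (w * g)) (by
            intro g g' hgg
            have h1 : Ideal.Quotient.mk I g = Ideal.Quotient.mk I g' := Quotient.sound hgg
            rw [Ideal.Quotient.eq] at h1
            have := ZZ_top hI' hf hz h1
            rw [mul_sub, map_sub] at this
            exact sub_eq_zero.1 this)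
          map_add' := by
            intro a b
            obtain ⟨a, rfl⟩ := Ideal.Quotient.mk_surjective a
            obtain ⟨b, rfl⟩ := Ideal.Quotient.mk_surjective b
            change cf (cst d M) (w * (a + b)) = cf (cst d M) (w * a) + cf (cst d M) (w * b)
            rw [mul_add, map_add]
          map_smul' := by
            intro t a
            obtain ⟨a, rfl⟩ := Ideal.Quotient.mk_surjective a
            change cf (cst d M) (w * (t • a)) = t • cf (cst d M) (w * a)
            rw [mul_smul_comm, map_smul] }
      exact ⟨ψ ∘ₗ Submodule.subtype _, u, w, hz, rfl, fun g hg h => rfl⟩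
    · -- surjectivity
      intro φ
      obtain ⟨w1, hw1⟩ := exists_w j hMj φ
      obtain ⟨w, hwd⟩ : ∃ w, w = weightedHomogeneousComponent (ωx d n) D w1 := ⟨_, rfl⟩
      have hwh : w.IsWeightedHomogeneous (ωx d n) D := by
        rw [hwd]; exact weightedHomogeneousComponent_isWeightedHomogeneous D w1
      have hw : ∀ g : B k d n, g.IsWeightedHomogeneous (ωx d n) j →
          ∀ h : Ideal.Quotient.mk I g ∈ SxDegZ k d n I j,
          φ ⟨Ideal.Quotient.mk I g, h⟩ = cf (cst d M) (w * g) := by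
        intro g hg h
        rw [hwd, top_whc_mul M w1 g D j hDj hg]
        exact hw1 g hg h
      obtain ⟨u, hz⟩ := ZZ_of_w (f := f) (M := M) w (by
        intro l
        apply mem_J_of
        intro a ha
        rw [← cf_mul_xm a (cst d M - a), add_tsub_cancel_of_le ha, mul_comm (f l), mul_assoc]
        have hg := (wh_ωx_of_ωb (hb l)).mul (xm_wh (k := k) (n := n) (cst d M - a))
        by_cases hc : (α l : ℤ) + ((∑ i, (cst d M - a) i : ℕ) : ℤ) = j
        · rw [hc] at hg
          rw [← hw _ hg (hmem _ hg)]
          have h0 : Ideal.Quotient.mk I (f l * xm (cst d M - a)) = 0 := by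
            rw [Ideal.Quotient.eq_zero_iff_mem, hI]
            exact Ideal.mul_mem_right _ _ (Ideal.subset_span ⟨l, rfl⟩)
          have h1 : (⟨_, hmem _ hg⟩ : SxDegZ k d n I j) = 0 := Subtype.ext h0
          rw [h1, map_zero]
        · refine top_wh_ne (hwh.mul hg) ?_
          intro h
          apply hc
          omega)
      have hz' := ZZ_px hb hz i D hD
      rw [whc_self hwh] at hz'
      refine ⟨⟨Ideal.Quotient.mk I (weightedHomogeneousComponent (ωx d n) i u), ?_, ?_⟩,
        _, w, hz', rfl, hw⟩
      · refine H0_of I (M + 1) _ fun l => ?_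
        have := ZZ_x hI' hf hz' l
        rw [← Ideal.Quotient.eq_zero_iff_mem] at this
        exact this
      · exact (mem_SxDegZ _ _ _).2
          ⟨_, weightedHomogeneousComponent_isWeightedHomogeneous i u, rfl⟩
    · rintro φ ⟨u, w, hz, hu, hw⟩
      apply hext
      intro g hg
      rw [hw g hg]
      have h1 : u ∈ I := Ideal.Quotient.eq_zero_iff_mem.1 hu
      exact top_J (Ideal.mul_mem_right _ _ ((ZZ_mem hI' hf hz).1 h1))
    · rintro s ⟨u, w, hz, hu, hw⟩
      have h1 : u ∈ I := uw_inj hI' hf hb hz i D j hD hDj (by rw [hu]; exact s.2.2)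
        (fun g hg => (hw g hg (hmem g hg)).symm)
      apply Subtype.ext
      rw [← hu]
      exact Ideal.Quotient.eq_zero_iff_mem.2 h1
  refine ⟨e, ?_, ?_⟩
  · intro a b hai s hs c q hcj t ht
    obtain ⟨u, w, hz, hu, hw⟩ := he s
    obtain ⟨t, ht'⟩ := t
    obtain ⟨g, hg, rfl⟩ := ht
    replace hg := (wh_bwt_iff _ _ _).1 hg
    rw [hcj] at hg
    have hgx := wh_ωx_of_ωb hg
    have h1 : e s ⟨_, ht'⟩ = cf (cst d M) (w * g) := hw g hgx ht'
    have hz' := ZZ_pb hb hz i D b (b - τ) hD (by rw [hτ])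
    have h2 : u - weightedHomogeneousComponent (ωb d n) (i, (b : ℤ)) u ∈ I := by
      rw [← hai]
      exact u_sub_bmem hI' hb (by rw [hu]; exact hs)
    have h3 := (ZZ_mem hI' hf (Submodule.sub_mem _ hz hz')).1 h2
    have h4 := top_J (Ideal.mul_mem_right g _ h3)
    rw [sub_mul, map_sub, sub_eq_zero] at h4
    rw [h1, h4]
    exact top_pb_mem w g D j _ _ hDj hg
  · intro a b hai φ hφ
    obtain ⟨u, w, hz, hu, hw⟩ := he (e.symm φ)
    rw [e.apply_symm_apply] at hw
    have hz' := ZZ_pb hb hz i D b (b - τ) hD (by rw [hτ])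
    have hu' : (weightedHomogeneousComponent (ωb d n) (i, (b : ℤ)) u).IsWeightedHomogeneous
      (ωb d n) (i, (b : ℤ)) := weightedHomogeneousComponent_isWeightedHomogeneous _ u
    have h1 : u - weightedHomogeneousComponent (ωb d n) (i, (b : ℤ)) u ∈ I := by
      refine uw_inj hI' hf hb (Submodule.sub_mem _ hz hz') i D j hD hDj ?_ ?_
      · change Ideal.Quotient.mk I (u - _) ∈ _
        rw [map_sub]
        refine Submodule.sub_mem _ (by rw [hu]; exact (e.symm φ).2.2) ?_
        exact (mem_SxDegZ _ _ _).2 ⟨_, wh_ωx_of_ωb hu', rfl⟩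
      · intro g hg
        refine wh_ind (fun g => cf (cst d M) ((w - weightedHomogeneousComponent (ωb d n)
          (D, (b : ℤ) - τ) w) * g) = 0) ?_ ?_ ?_ hg
        · simp
        · intro g h hg hh
          rw [mul_add, map_add, hg, hh, add_zero]
        · intro m c hm
          have hmb : (monomial m c : B k d n).IsWeightedHomogeneous (ωb d n)
              (j, ((∑ i, m (Sum.inr i) : ℕ) : ℤ)) := by
            apply isWeightedHomogeneous_monomial
            rw [weight_ωb, ← hm, weight_ωx]
          have hmx := wh_ωx_of_ωb hmb
          rw [sub_mul, map_sub, sub_eq_zero]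
          symm
          refine top_pb_eq w _ D j _ _ hDj hmb ?_
          rw [← hw _ hmx (hmem _ hmx)]
          rw [weight_ωx] at hm
          refine hφ (∑ i, m (Sum.inl i)) _ hm _ ⟨monomial m c, ?_, rfl⟩
          refine (wh_bwt_iff _ _ _).2 ?_
          rw [hm]
          exact hmb
    rw [← hu]
    refine ⟨weightedHomogeneousComponent (ωb d n) (i, (b : ℤ)) u, ?_, ?_⟩
    · refine (wh_bwt_iff _ _ _).2 ?_
      rw [hai]; exact hu'
    · symm
      exact Ideal.Quotient.eq.2 h1

end Stmt2
end
end
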